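/- arXiv:1604.00753 — 3 statements merged into one kernel-verified Lean document; each statement's English description precedes it below -/
import Mathlib

section
/- The zeroth Fourier cosine coefficient of x·log Γ(x) on (0,1) satisfies 2·∫₀¹ x·log Γ(x) dx = (1/2)·log(2π/A⁴), where A = e^{1/12 − ζ′(−1)} is the Glaisher–Kinkelin constant. Equivalently, ∫₀¹ x·log Γ(x) dx = (1/4)log(2π) − 1/12 + ζ′(−1). -/
open Real intervalIntegral

open Filter Topology Set

/-- The boundary term of the Euler–Maclaurin expansion of `(s - 1) * ∑ k ^ (-s)`. -/
noncomputable def zetaBoundary (a : ℝ) (s : ℂ) : ℂ :=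
  (s - 1) / 2 * (a : ℂ) ^ (-s) + (a : ℂ) ^ (1 - s) + s * (s - 1) / 12 * (a : ℂ) ^ (-s - 1)

/-- The Euler–Maclaurin remainder of `(s - 1) * ∑ k ^ (-s)` on `[a, a + 1]`. -/
noncomputable def zetaRemainder (a : ℝ) (s : ℂ) : ℂ :=
  (s - 1) * (a : ℂ) ^ (-s) + zetaBoundary (a + 1) s - zetaBoundary a s

lemma hasDerivAt_ofReal_add_cpow {a x : ℝ} (h : 0 < a + x) (r : ℂ) :
    HasDerivAt (fun x : ℝ => ((a + x : ℝ) : ℂ) ^ r) (r * ((a + x : ℝ) : ℂ) ^ (r - 1)) x := by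
  have h1 : HasDerivAt (fun z : ℂ => ((a : ℂ) + z) ^ r) (r * ((a : ℂ) + x) ^ (r - 1) * 1) (x : ℂ) :=
    ((hasDerivAt_id (x : ℂ)).const_add (a : ℂ)).cpow_const
      (by simpa using Complex.ofReal_mem_slitPlane.2 h)
  simpa using h1.comp_ofReal

lemma norm_zetaRemainder_le {a : ℝ} (ha : 0 < a) {s : ℂ} (hs : -3 ≤ s.re) :
    ‖zetaRemainder a s‖ ≤ ‖(s - 1) * s * (s + 1) * (s + 2)‖ * a ^ (-s.re - 3) := by
  let g : ℝ → ℂ := fun x =>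
    (s - 1) * (((x ^ 3 - 3 / 2 * x ^ 2 + x / 2 : ℝ) : ℂ) / 6 *
        (s * (s + 1) * ((a + x : ℝ) : ℂ) ^ (-s - 2))
      - ((x ^ 2 - x + 1 / 6 : ℝ) : ℂ) / 2 * (-s * ((a + x : ℝ) : ℂ) ^ (-s - 1))
      + ((x - 1 / 2 : ℝ) : ℂ) * ((a + x : ℝ) : ℂ) ^ (-s)) + ((a + x : ℝ) : ℂ) ^ (1 - s)
  let g' : ℝ → ℂ := fun x =>
    -((s - 1) * s * (s + 1) * (s + 2)) * (((x ^ 3 - 3 / 2 * x ^ 2 + x / 2) / 6 : ℝ) : ℂ) *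
      ((a + x : ℝ) : ℂ) ^ (-s - 3)
  have hg : ∀ x ∈ Icc (0 : ℝ) 1, HasDerivWithinAt g (g' x) (Icc (0 : ℝ) 1) x := by
    intro x hx
    have hax : 0 < a + x := by linarith [hx.1]
    have p3 : HasDerivAt (fun x : ℝ => x ^ 3 - 3 / 2 * x ^ 2 + x / 2)
        (3 * (x ^ 2 - x + 1 / 6)) x := by
      have := (((hasDerivAt_pow 3 x).sub ((hasDerivAt_pow 2 x).const_mul (3 / 2))).add
        ((hasDerivAt_id x).div_const 2))
      refine this.congr_deriv ?_
      norm_num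
      ring
    have p2 : HasDerivAt (fun x : ℝ => x ^ 2 - x + 1 / 6) (2 * (x - 1 / 2)) x := by
      refine (((hasDerivAt_pow 2 x).sub (hasDerivAt_id x)).add_const (1 / 6 : ℝ)).congr_deriv ?_
      norm_num
      ring
    have p1 : HasDerivAt (fun x : ℝ => x - 1 / 2) 1 x := (hasDerivAt_id x).sub_const _
    have H := ((((p3.ofReal_comp.div_const 6).mul
        ((hasDerivAt_ofReal_add_cpow hax (-s - 2)).const_mul (s * (s + 1)))).sub
      ((p2.ofReal_comp.div_const 2).mul
        ((hasDerivAt_ofReal_add_cpow hax (-s - 1)).const_mul (-s)))).add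
      (p1.ofReal_comp.mul (hasDerivAt_ofReal_add_cpow hax (-s)))).const_mul (s - 1) |>.add
      (hasDerivAt_ofReal_add_cpow hax (1 - s))
    refine (H.congr_deriv ?_).hasDerivWithinAt
    simp only [g']
    rw [show -s - 2 - 1 = -s - 3 by ring, show -s - 1 - 1 = -s - 2 by ring,
      show 1 - s - 1 = -s by ring]
    push_cast
    ring
  have hb : ∀ x ∈ Ico (0 : ℝ) 1,
      ‖g' x‖ ≤ ‖(s - 1) * s * (s + 1) * (s + 2)‖ * a ^ (-s.re - 3) := by
    intro x hx
    have hax : 0 < a + x := by linarith [hx.1]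
    simp only [g']
    rw [norm_mul, norm_mul, norm_neg, Complex.norm_real, mul_assoc]
    gcongr
    rw [Complex.norm_cpow_eq_rpow_re_of_pos hax]
    have h1 : ‖(x ^ 3 - 3 / 2 * x ^ 2 + x / 2) / 6‖ ≤ 1 := by
      rw [Real.norm_eq_abs, abs_le]
      have h0 := hx.1
      have h2 := hx.2
      have h3 : x ^ 3 ≤ 1 := pow_le_one₀ h0 h2.le
      have h4 : x ^ 2 ≤ 1 := pow_le_one₀ h0 h2.le
      have h5 : 0 ≤ x ^ 3 := by positivity
      have h6 : 0 ≤ x ^ 2 := by positivity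
      constructor <;> linarith
    have h2 : (a + x) ^ (-s - 3).re ≤ a ^ (-s.re - 3) := by
      simp only [Complex.sub_re, Complex.neg_re, Complex.re_ofNat]
      exact Real.rpow_le_rpow_of_nonpos ha (by linarith [hx.1]) (by linarith)
    calc _ ≤ 1 * a ^ (-s.re - 3) := by gcongr
      _ = _ := one_mul _
  have key := norm_image_sub_le_of_norm_deriv_le_segment_01' hg hb
  have e : g 1 - g 0 = zetaRemainder a s := by
    simp only [g, zetaRemainder, zetaBoundary]
    norm_num
    ring
  rwa [e] at key

lemma zetaBoundary_differentiable {a : ℝ} (ha : 0 < a) : Differentiable ℂ (zetaBoundary a) := by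
  have : (a : ℂ) ≠ 0 := by exact_mod_cast ha.ne'
  intro s
  unfold zetaBoundary
  fun_prop (disch := simp [this])

lemma zetaRemainder_differentiable {a : ℝ} (ha : 0 < a) : Differentiable ℂ (zetaRemainder a) := by
  have : (a : ℂ) ≠ 0 := by exact_mod_cast ha.ne'
  have h1 := zetaBoundary_differentiable ha
  have h2 := zetaBoundary_differentiable (a := a + 1) (by linarith)
  intro s
  unfold zetaRemainder
  fun_prop (disch := simp [this])

lemma sum_range_zetaRemainder (s : ℂ) (n : ℕ) :
    ∑ k ∈ Finset.range n, zetaRemainder (k + 1) s =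
      (s - 1) * ∑ k ∈ Finset.range n, 1 / ((k : ℂ) + 1) ^ s + zetaBoundary (n + 1) s -
        zetaBoundary 1 s := by
  induction n with
  | zero => simp
  | succ n ih =>
    rw [Finset.sum_range_succ, ih, Finset.sum_range_succ]
    simp only [zetaRemainder]
    push_cast
    rw [Complex.cpow_neg]
    ring

lemma tendsto_natCast_add_one_cpow_zero {r : ℂ} (hr : r.re < 0) :
    Tendsto (fun n : ℕ => (((n : ℝ) + 1 : ℝ) : ℂ) ^ r) atTop (𝓝 0) := by
  rw [tendsto_zero_iff_norm_tendsto_zero]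
  have h : Tendsto (fun n : ℕ => ((n : ℝ) + 1) ^ (-(-r.re))) atTop (𝓝 0) :=
    (tendsto_rpow_neg_atTop (by linarith)).comp
      (tendsto_atTop_add_const_right _ _ tendsto_natCast_atTop_atTop)
  refine h.congr fun n => ?_
  rw [Complex.norm_cpow_eq_rpow_re_of_pos (by positivity), neg_neg]

lemma tendsto_zetaBoundary {s : ℂ} (hs : 1 < s.re) :
    Tendsto (fun n : ℕ => zetaBoundary (n + 1) s) atTop (𝓝 0) := by
  have h1 := tendsto_natCast_add_one_cpow_zero (r := -s) (by simp; linarith)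
  have h2 := tendsto_natCast_add_one_cpow_zero (r := 1 - s) (by simp; linarith)
  have h3 := tendsto_natCast_add_one_cpow_zero (r := -s - 1) (by simp; linarith)
  simpa [zetaBoundary] using
    ((h1.const_mul ((s - 1) / 2)).add h2).add (h3.const_mul (s * (s - 1) / 12))

lemma tendsto_sum_zetaRemainder {s : ℂ} (hs : 1 < s.re) :
    Tendsto (fun n : ℕ => ∑ k ∈ Finset.range n, zetaRemainder (k + 1) s) atTop
      (𝓝 (riemannZeta₁ s - zetaBoundary 1 s)) := by
  have hs1 : s ≠ 1 := by
    rintro rfl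
    simp at hs
  have hz : riemannZeta₁ s = (s - 1) * riemannZeta s + 0 := by
    rw [riemannZeta_eq_inv_sub_mul hs1, mul_inv_cancel_left₀ (sub_ne_zero.2 hs1), add_zero]
  have hsum : HasSum (fun n : ℕ => 1 / ((n : ℂ) + 1) ^ s) (riemannZeta s) := by
    rw [zeta_eq_tsum_one_div_nat_add_one_cpow hs]
    refine Summable.hasSum ?_
    have := (summable_nat_add_iff 1).2 (Complex.summable_one_div_nat_cpow.2 hs)
    simpa using this
  rw [hz]
  simp_rw [sum_range_zetaRemainder]
  exact ((hsum.tendsto_sum_nat.const_mul _).add (tendsto_zetaBoundary hs)).sub_const _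

/-- A bounded convex region containing `-1` and meeting the half-plane `1 < re s`. -/
def zetaRegion : Set ℂ := {s | -(3 / 2) < s.re} ∩ Metric.ball 0 3

lemma isOpen_zetaRegion : IsOpen zetaRegion :=
  (isOpen_lt continuous_const Complex.continuous_re).inter Metric.isOpen_ball

lemma neg_one_mem_zetaRegion : (-1 : ℂ) ∈ zetaRegion := by
  simp [zetaRegion]
  norm_num

lemma norm_zetaRemainder_le_of_mem (n : ℕ) {s : ℂ} (hs : s ∈ zetaRegion) :
    ‖zetaRemainder (n + 1) s‖ ≤ 240 * ((n : ℝ) + 1) ^ (-(3 / 2) : ℝ) := by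
  obtain ⟨h1, h2⟩ := hs
  simp only [mem_ofPred_eq, Metric.mem_ball, dist_zero_right] at h1 h2
  refine (norm_zetaRemainder_le (by positivity) (by linarith)).trans ?_
  have e1 : ‖s - 1‖ ≤ 4 := (norm_sub_le _ _).trans (by rw [norm_one]; linarith)
  have e2 : ‖s + 1‖ ≤ 4 := (norm_add_le _ _).trans (by rw [norm_one]; linarith)
  have e3 : ‖s + 2‖ ≤ 5 := (norm_add_le _ _).trans (by rw [Complex.norm_ofNat]; linarith)
  gcongr ?_ * ?_
  · rw [norm_mul, norm_mul, norm_mul]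
    calc _ ≤ (4 * 3 * 4 * 5 : ℝ) := by gcongr
      _ = 240 := by norm_num
  · exact Real.rpow_le_rpow_of_exponent_le (by linarith [n.cast_nonneg (α := ℝ)]) (by linarith)

lemma summable_zetaRemainder_bound :
    Summable fun n : ℕ => 240 * ((n : ℝ) + 1) ^ (-(3 / 2) : ℝ) := by
  refine Summable.mul_left _ ?_
  have := (summable_nat_add_iff 1).2 (Real.summable_nat_rpow (p := -(3 / 2)).2 (by norm_num))
  simpa using this

lemma eqOn_riemannZeta₁ :
    EqOn riemannZeta₁ (fun s => zetaBoundary 1 s + ∑' n : ℕ, zetaRemainder (n + 1) s)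
      zetaRegion := by
  have hd : DifferentiableOn ℂ
      (fun s => zetaBoundary 1 s + ∑' n : ℕ, zetaRemainder (n + 1) s) zetaRegion :=
    (zetaBoundary_differentiable one_pos).differentiableOn.add
      (Complex.differentiableOn_tsum_of_summable_norm summable_zetaRemainder_bound
        (fun n => (zetaRemainder_differentiable (by positivity)).differentiableOn)
        isOpen_zetaRegion fun n s hs => norm_zetaRemainder_le_of_mem n hs)
  have hconn : IsPreconnected zetaRegion :=
    ((convex_halfSpace_re_gt _).inter (convex_ball _ _)).isPreconnected
  have h2 : (2 : ℂ) ∈ zetaRegion := by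
    simp [zetaRegion]
    norm_num
  refine (differentiable_riemannZeta₁.differentiableOn.analyticOnNhd
    isOpen_zetaRegion).eqOn_of_preconnected_of_eventuallyEq
    (hd.analyticOnNhd isOpen_zetaRegion) hconn h2 ?_
  filter_upwards [isOpen_zetaRegion.mem_nhds h2,
    (isOpen_lt continuous_const Complex.continuous_re).mem_nhds
      (show (1 : ℝ) < (2 : ℂ).re by norm_num)] with s hs hs1
  have hsum : Summable fun n : ℕ => zetaRemainder (n + 1) s :=
    summable_zetaRemainder_bound.of_norm_bounded fun n => norm_zetaRemainder_le_of_mem n hs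
  rw [tendsto_nhds_unique hsum.hasSum.tendsto_sum_nat (tendsto_sum_zetaRemainder hs1)]
  ring

lemma riemannZeta_neg_one : riemannZeta (-1) = -1 / 12 := by
  have := riemannZeta_neg_nat_eq_bernoulli' 1
  norm_num [bernoulli'_two] at this
  rw [this]
  norm_num

lemma deriv_riemannZeta₁_neg_one :
    deriv riemannZeta₁ (-1) = -1 / 12 - 2 * deriv riemannZeta (-1) := by
  have h1 := deriv_riemannZeta_eq_neg_inv_sub_sq_mul_add (s := -1) (by norm_num)
  have h2 := riemannZeta_eq_inv_sub_mul (s := -1) (by norm_num)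
  rw [riemannZeta_neg_one] at h2
  norm_num at h1 h2
  rw [h1]
  linear_combination h2

lemma hasDerivAt_cpow_comp {a : ℝ} (ha : 0 < a) {f : ℂ → ℂ} {f' s : ℂ} (hf : HasDerivAt f f' s) :
    HasDerivAt (fun s => (a : ℂ) ^ f s) ((a : ℂ) ^ f s * (Real.log a : ℂ) * f') s := by
  rw [Complex.ofReal_log ha.le]
  exact hf.const_cpow (Or.inl (by exact_mod_cast ha.ne'))

lemma hasDerivAt_zetaBoundary_neg_one {a : ℝ} (ha : 0 < a) :
    HasDerivAt (zetaBoundary a)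
      ((a / 2 + a * Real.log a - a ^ 2 * Real.log a - 1 / 4 - Real.log a / 6 : ℝ) : ℂ) (-1) := by
  have hid := hasDerivAt_id (-1 : ℂ)
  have h := ((((hid.sub_const 1).div_const 2).mul (hasDerivAt_cpow_comp ha hid.neg)).add
    (hasDerivAt_cpow_comp ha (hid.const_sub 1))).add
    (((hid.mul (hid.sub_const 1)).div_const 12).mul
      (hasDerivAt_cpow_comp ha (hid.neg.sub_const 1)))
  refine h.congr_deriv ?_
  norm_num
  ring

lemma hasDerivAt_zetaRemainder_neg_one {a : ℝ} (ha : 0 < a) :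
    HasDerivAt (zetaRemainder a)
      (((a + 2 * (a * Real.log a) : ℝ) : ℂ) + deriv (zetaBoundary (a + 1)) (-1)
        - deriv (zetaBoundary a) (-1)) (-1) := by
  have hid := hasDerivAt_id (-1 : ℂ)
  have h := (((hid.sub_const 1).mul (hasDerivAt_cpow_comp ha hid.neg)).add
    (zetaBoundary_differentiable (a := a + 1) (by linarith) (-1)).hasDerivAt).sub
    (zetaBoundary_differentiable ha (-1)).hasDerivAt
  refine h.congr_deriv ?_
  norm_num

/-- The asymptotic expansion of the hyperfactorial defining the Glaisher–Kinkelin constant. -/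
lemma tendsto_sum_mul_log :
    Tendsto (fun n : ℕ => 2 * ∑ k ∈ Finset.range n, ((k : ℝ) + 1) * Real.log (k + 1)
      + ((n : ℝ) + 1) ^ 2 / 2 + (n + 1) * Real.log (n + 1) - (n + 1) ^ 2 * Real.log (n + 1)
      - Real.log (n + 1) / 6) atTop (𝓝 (1 / 6 - 2 * (deriv riemannZeta (-1)).re)) := by
  have hs := (Complex.hasSum_deriv_of_summable_norm summable_zetaRemainder_bound
    (fun n => (zetaRemainder_differentiable (by positivity)).differentiableOn)
    isOpen_zetaRegion (fun n s hs => norm_zetaRemainder_le_of_mem n hs)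
    neg_one_mem_zetaRegion).tendsto_sum_nat
  have hts : DifferentiableAt ℂ (fun s => ∑' n : ℕ, zetaRemainder (n + 1) s) (-1) :=
    (Complex.differentiableOn_tsum_of_summable_norm summable_zetaRemainder_bound
      (fun n => (zetaRemainder_differentiable (by positivity)).differentiableOn)
      isOpen_zetaRegion fun n s hs => norm_zetaRemainder_le_of_mem n hs).differentiableAt
      (isOpen_zetaRegion.mem_nhds neg_one_mem_zetaRegion)
  have hz : deriv riemannZeta₁ (-1) = deriv (zetaBoundary 1) (-1)
      + deriv (fun s => ∑' n : ℕ, zetaRemainder (n + 1) s) (-1) := by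
    rw [(eqOn_riemannZeta₁.eventuallyEq_of_mem
      (isOpen_zetaRegion.mem_nhds neg_one_mem_zetaRegion)).deriv_eq]
    exact deriv_fun_add (zetaBoundary_differentiable one_pos _) hts
  have hpart : ∀ n : ℕ, ∑ k ∈ Finset.range n, deriv (zetaRemainder (k + 1)) (-1) =
      ((∑ k ∈ Finset.range n, (((k : ℝ) + 1) + 2 * (((k : ℝ) + 1) * Real.log (k + 1))) : ℝ) : ℂ)
        + deriv (zetaBoundary (n + 1)) (-1) - deriv (zetaBoundary 1) (-1) := by
    intro n
    induction n with
    | zero => simp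
    | succ n ih =>
      rw [Finset.sum_range_succ, ih, Finset.sum_range_succ,
        (hasDerivAt_zetaRemainder_neg_one (by positivity)).deriv]
      push_cast
      ring
  have hre := ((Complex.continuous_re.tendsto _).comp
    (hs.add_const (deriv (zetaBoundary 1) (-1)))).add_const (1 / 4)
  have hlim : (deriv (fun s => ∑' n : ℕ, zetaRemainder (n + 1) s) (-1)
      + deriv (zetaBoundary 1) (-1)).re + 1 / 4 = 1 / 6 - 2 * (deriv riemannZeta (-1)).re := by
    rw [add_comm (deriv _ _), ← hz, deriv_riemannZeta₁_neg_one]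
    norm_num
    ring
  rw [hlim] at hre
  refine hre.congr fun n => ?_
  simp only [Function.comp_apply, hpart, sub_add_cancel,
    (hasDerivAt_zetaBoundary_neg_one (a := n + 1) (by positivity)).deriv]
  rw [← Complex.ofReal_add, Complex.ofReal_re, Finset.sum_add_distrib, ← Finset.mul_sum]
  have hg : ∑ k ∈ Finset.range n, ((k : ℝ) + 1) = n * (n + 1) / 2 := by
    clear * -
    induction n with
    | zero => simp
    | succ n ih =>
      rw [Finset.sum_range_succ, ih]
      push_cast
      ring
  rw [hg]
  ring

lemma intervalIntegrable_mul_log_add_natCast (m : ℕ) :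
    IntervalIntegrable (fun x : ℝ => x * Real.log (x + m)) MeasureTheory.volume 0 1 := by
  refine ContinuousOn.intervalIntegrable ?_
  rw [uIcc_of_le zero_le_one]
  rcases m.eq_zero_or_pos with rfl | hm
  · simpa using Real.continuous_mul_log.continuousOn
  · refine continuousOn_id.mul (ContinuousOn.log (by fun_prop) fun x hx => ?_)
    have := hx.1
    positivity

lemma integral_mul_log_add_natCast (m : ℕ) :
    ∫ x in (0 : ℝ)..1, x * Real.log (x + m) =
      (1 - (m : ℝ) ^ 2) / 2 * Real.log (m + 1) + (m : ℝ) ^ 2 / 2 * Real.log m + m / 2 - 1 / 4 := by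
  have hc : ContinuousOn (fun x : ℝ => (x - m) / 2 * ((x + m) * Real.log (x + m)) - x ^ 2 / 4
      + m * x / 2) (Icc 0 1) := by
    have : Continuous fun x : ℝ => (x + m) * Real.log (x + m) :=
      Real.continuous_mul_log.comp (continuous_add_const (m : ℝ))
    fun_prop
  rw [integral_eq_sub_of_hasDerivAt_of_le zero_le_one hc (f' := fun x => x * Real.log (x + m))]
  · norm_num
    ring_nf
  · intro x hx
    have hxm : x + m ≠ 0 := by
      have := hx.1
      positivity
    have hid := hasDerivAt_id x
    have h := ((((hid.sub_const (m : ℝ)).div_const 2).mul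
      ((hid.add_const (m : ℝ)).mul ((hid.add_const (m : ℝ)).log hxm))).sub
      ((hasDerivAt_pow 2 x).div_const 4)).add ((hid.const_mul (m : ℝ)).div_const 2)
    refine h.congr_deriv ?_
    simp only [id_eq]
    field_simp
    norm_num
    ring
  · exact intervalIntegrable_mul_log_add_natCast m

lemma sum_integral_mul_log_add_natCast (n : ℕ) :
    ∑ m ∈ Finset.range n, ∫ x in (0 : ℝ)..1, x * Real.log (x + m) =
      ∑ k ∈ Finset.range n, ((k : ℝ) + 1) * Real.log (k + 1) - (n : ℝ) ^ 2 / 2 * Real.log n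
        + (n : ℝ) ^ 2 / 4 - n / 2 := by
  induction n with
  | zero => simp
  | succ n ih =>
    rw [Finset.sum_range_succ, ih, Finset.sum_range_succ, integral_mul_log_add_natCast]
    push_cast
    ring

lemma mul_logGammaSeq_eq (n : ℕ) (x : ℝ) :
    x * BohrMollerup.logGammaSeq x n = Real.log n * x ^ 2 + Real.log n.factorial * x
      - ∑ m ∈ Finset.range (n + 1), x * Real.log (x + m) := by
  rw [BohrMollerup.logGammaSeq, ← Finset.mul_sum]
  ring

lemma intervalIntegrable_mul_logGammaSeq (n : ℕ) :
    IntervalIntegrable (fun x => x * BohrMollerup.logGammaSeq x n) MeasureTheory.volume 0 1 := by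
  simp_rw [mul_logGammaSeq_eq]
  refine (Continuous.intervalIntegrable (by fun_prop) _ _).sub ?_
  have := IntervalIntegrable.sum (Finset.range (n + 1))
    (fun m _ => intervalIntegrable_mul_log_add_natCast m)
  simpa [Finset.sum_fn] using this

lemma integral_mul_logGammaSeq (n : ℕ) :
    ∫ x in (0 : ℝ)..1, x * BohrMollerup.logGammaSeq x n =
      Real.log n / 3 + Real.log n.factorial / 2
        - (∑ k ∈ Finset.range (n + 1), ((k : ℝ) + 1) * Real.log (k + 1)
          - ((n : ℝ) + 1) ^ 2 / 2 * Real.log (n + 1) + ((n : ℝ) + 1) ^ 2 / 4 - (n + 1) / 2) := by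
  simp_rw [mul_logGammaSeq_eq]
  have hs := IntervalIntegrable.sum (Finset.range (n + 1))
    (fun m _ => intervalIntegrable_mul_log_add_natCast m)
  rw [integral_sub (Continuous.intervalIntegrable (by fun_prop) _ _)
      (by simpa [Finset.sum_fn] using hs),
    integral_add (Continuous.intervalIntegrable (by fun_prop) _ _)
      (Continuous.intervalIntegrable (by fun_prop) _ _),
    integral_finsetSum fun m _ => intervalIntegrable_mul_log_add_natCast m,
    sum_integral_mul_log_add_natCast, integral_const_mul, integral_const_mul, integral_pow,
    integral_id]
  push_cast
  ring

lemma intervalIntegrable_mul_log_Gamma :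
    IntervalIntegrable (fun x => x * Real.log (Real.Gamma x)) MeasureTheory.volume 0 1 := by
  refine ContinuousOn.intervalIntegrable ?_
  rw [uIcc_of_le zero_le_one]
  have hc : ContinuousOn (fun x : ℝ => x * Real.log (Real.Gamma (x + 1)) - x * Real.log x)
      (Icc 0 1) := by
    refine ContinuousOn.sub (continuousOn_id.mul (ContinuousOn.log ?_ ?_))
      Real.continuous_mul_log.continuousOn
    · intro x hx
      have hG : ContinuousAt Real.Gamma (x + 1) :=
        (Real.differentiableAt_Gamma fun m => by
          have := hx.1
          have := m.cast_nonneg (α := ℝ)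
          linarith).continuousAt
      exact (hG.comp (f := fun y : ℝ => y + 1)
        (continuous_add_const (1 : ℝ)).continuousAt).continuousWithinAt
    · exact fun x hx => (Real.Gamma_pos_of_pos (by linarith [hx.1])).ne'
  refine hc.congr fun x hx => ?_
  rcases hx.1.eq_or_lt with rfl | hx0
  · simp
  · simp only
    rw [Real.Gamma_add_one hx0.ne', Real.log_mul hx0.ne' (Real.Gamma_pos_of_pos hx0).ne']
    ring

lemma tendsto_integral_mul_logGammaSeq :
    Tendsto (fun n : ℕ => ∫ x in (0 : ℝ)..1, x * BohrMollerup.logGammaSeq x n) atTop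
      (𝓝 (∫ x in (0 : ℝ)..1, x * Real.log (Real.Gamma x))) := by
  rw [tendsto_iff_norm_sub_tendsto_zero]
  refine squeeze_zero' (Eventually.of_forall fun n => norm_nonneg _) ?_
    Real.tendsto_log_nat_add_one_sub_log
  filter_upwards [eventually_ne_atTop 0] with n hn
  rw [← integral_sub (intervalIntegrable_mul_logGammaSeq n) intervalIntegrable_mul_log_Gamma]
  have hfeq : ∀ {y : ℝ}, 0 < y →
      (Real.log ∘ Real.Gamma) (y + 1) = (Real.log ∘ Real.Gamma) y + Real.log y := by
    intro y hy
    simp only [Function.comp_apply]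
    rw [Real.Gamma_add_one hy.ne', Real.log_mul hy.ne' (Real.Gamma_pos_of_pos hy).ne', add_comm]
  have h := norm_integral_le_of_norm_le_const (a := (0 : ℝ)) (b := 1)
    (f := fun x => x * BohrMollerup.logGammaSeq x n - x * Real.log (Real.Gamma x))
    (C := Real.log (n + 1) - Real.log n) ?_
  · simpa using h
  · intro x hx
    rw [uIoc_of_le zero_le_one] at hx
    have h1 := BohrMollerup.le_logGammaSeq Real.convexOn_log_Gamma hfeq hx.1 hx.2 n
    have h2 := BohrMollerup.ge_logGammaSeq Real.convexOn_log_Gamma hfeq hx.1 hn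
    simp only [Function.comp_apply, Real.Gamma_one, Real.log_one] at h1 h2
    have h3 : 0 ≤ Real.log (n + 1) - Real.log n :=
      sub_nonneg.2 (Real.log_le_log (by positivity) (by linarith))
    have h4 : |BohrMollerup.logGammaSeq x n - Real.log (Real.Gamma x)| ≤
        Real.log (n + 1) - Real.log n := by
      rw [abs_le]
      constructor <;> nlinarith [hx.1, hx.2]
    rw [← mul_sub, norm_mul, Real.norm_eq_abs, Real.norm_eq_abs, abs_of_pos hx.1]
    calc _ ≤ 1 * (Real.log (n + 1) - Real.log n) := by
          gcongr
          exact hx.2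
      _ = _ := one_mul _

lemma integral_mul_log_Gamma :
    ∫ x in (0 : ℝ)..1, x * Real.log (Real.Gamma x) =
      (1 / 4) * Real.log (2 * π) - 1 / 12 + (deriv riemannZeta (-1)).re := by
  have hst : Tendsto (fun n : ℕ => Real.log (Stirling.stirlingSeq (n + 1))) atTop
      (𝓝 (Real.log (√π))) :=
    ((Real.continuousAt_log (by positivity)).tendsto.comp
      Stirling.tendsto_stirlingSeq_sqrt_pi).comp (tendsto_add_atTop_nat 1)
  have hlim := (((tendsto_log_nat_add_one_sub_log.const_mul (-1 / 3)).add
    (hst.const_mul (1 / 2))).add_const (Real.log 2 / 4)).sub (tendsto_sum_mul_log.const_mul (1 / 2))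
  have hval : -1 / 3 * 0 + 1 / 2 * Real.log (√π) + Real.log 2 / 4
      - 1 / 2 * (1 / 6 - 2 * (deriv riemannZeta (-1)).re) =
      (1 / 4) * Real.log (2 * π) - 1 / 12 + (deriv riemannZeta (-1)).re := by
    rw [Real.log_sqrt pi_pos.le, Real.log_mul two_ne_zero pi_ne_zero]
    ring
  rw [hval] at hlim
  refine tendsto_nhds_unique tendsto_integral_mul_logGammaSeq (hlim.congr fun n => ?_)
  have hn : (n : ℝ) + 1 ≠ 0 := by positivity
  rw [integral_mul_logGammaSeq, Stirling.log_stirlingSeq_formula, Finset.sum_range_succ,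
    Nat.factorial_succ]
  push_cast
  rw [Real.log_mul hn (by positivity), Real.log_mul two_ne_zero hn,
    Real.log_div hn (Real.exp_ne_zero 1), Real.log_exp]
  ring

/-- The zeroth Fourier cosine coefficient of `x·log Γ(x)` on `(0,1)`:
`2·∫₀¹ x·log Γ(x) dx = (1/2)·log(2π/A⁴)` where `A = exp(1/12 − ζ′(−1))` is the
Glaisher–Kinkelin constant; equivalently
`∫₀¹ x·log Γ(x) dx = (1/4)·log(2π) − 1/12 + ζ′(−1)`. -/
theorem integral_x_mul_log_Gamma :
    (2 * ∫ x in (0:ℝ)..1, x * Real.log (Real.Gamma x) =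
      (1 / 2) * Real.log (2 * π /
        (Real.exp (1 / 12 - (deriv riemannZeta (-1)).re)) ^ 4)) ∧
    (∫ x in (0:ℝ)..1, x * Real.log (Real.Gamma x) =
      (1 / 4) * Real.log (2 * π) - 1 / 12 + (deriv riemannZeta (-1)).re) := by
  refine ⟨?_, integral_mul_log_Gamma⟩
  rw [integral_mul_log_Gamma, Real.log_div (by positivity) (by positivity), Real.log_pow,
    Real.log_exp]
  push_cast
  ring
end

section
/- For every positive integer n, the n-th Fourier cosine coefficient of x·log Γ(x) on (0,1) satisfies 2·∫₀¹ x·log Γ(x)·cos(2nπx) dx = 1/(4n) − C/(π²n²) − (log n)/(4π²n²) − T_n/π², where C = log(2π) + γ and T_n = ∑_{i=2, i≠n}^∞ (log i)/(i² − n²). -/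
open Real
open MeasureTheory Set Filter Topology

theorem hasSum_sq_integral_mul_cos_add_sq_integral_mul_sin {f : ℝ → ℝ}
    (hf : MemLp f 2 (volume.restrict (Ioc 0 1))) :
    HasSum (fun k : ℤ ↦ (∫ x in (0 : ℝ)..1, f x * cos (2 * k * π * x)) ^ 2 +
      (∫ x in (0 : ℝ)..1, f x * sin (2 * k * π * x)) ^ 2) (∫ x in (0 : ℝ)..1, f x ^ 2) := by
  have hfi : IntervalIntegrable f volume 0 1 := by
    rw [intervalIntegrable_iff_integrableOn_Ioc_of_le zero_le_one]
    exact hf.integrable (by norm_num)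
  have h := hasSum_sq_fourierCoeffOn (f := fun x ↦ (f x : ℂ)) zero_lt_one hf.ofReal
  convert h using 1
  · ext k
    have hc : IntervalIntegrable (fun x ↦ f x * cos (2 * k * π * x)) volume 0 1 :=
      hfi.mul_continuousOn (by fun_prop)
    have hs : IntervalIntegrable (fun x ↦ f x * sin (2 * k * π * x)) volume 0 1 :=
      hfi.mul_continuousOn (by fun_prop)
    have ofReal {u : ℝ → ℝ} (hu : IntervalIntegrable u volume 0 1) :
        IntervalIntegrable (fun x ↦ (u x : ℂ)) volume 0 1 := ⟨hu.1.ofReal, hu.2.ofReal⟩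
    have key : fourierCoeffOn zero_lt_one (fun x ↦ (f x : ℂ)) k =
        ((∫ x in (0 : ℝ)..1, f x * cos (2 * k * π * x) : ℝ) : ℂ) +
        ((-∫ x in (0 : ℝ)..1, f x * sin (2 * k * π * x) : ℝ) : ℂ) * Complex.I := by
      rw [fourierCoeffOn_eq_integral, ← intervalIntegral.integral_neg,
        ← intervalIntegral.integral_ofReal, ← intervalIntegral.integral_ofReal,
        ← intervalIntegral.integral_mul_const, ← intervalIntegral.integral_add
          (ofReal hc) ((ofReal (u := fun x ↦ -(f x * sin (2 * k * π * x))) hs.neg).mul_const _)]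
      simp only [sub_zero, div_one, one_smul]
      refine intervalIntegral.integral_congr fun x _ ↦ ?_
      simp only [fourier_coe_apply, smul_eq_mul]
      rw [show (2 * π * Complex.I * ((-k : ℤ) : ℂ) * x / ((1 - 0 : ℝ) : ℂ)) =
        ((-(2 * k * π * x) : ℝ) : ℂ) * Complex.I by push_cast; ring, Complex.exp_mul_I,
        ← Complex.ofReal_cos, ← Complex.ofReal_sin, cos_neg, sin_neg]
      push_cast
      ring
    rw [key, ← Complex.normSq_eq_norm_sq, Complex.normSq_add_mul_I]
    ring
  · simp

theorem hasSum_integral_mul_cos_mul_add_integral_mul_sin_mul {f g : ℝ → ℝ}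
    (hf : MemLp f 2 (volume.restrict (Ioc 0 1))) (hg : MemLp g 2 (volume.restrict (Ioc 0 1))) :
    HasSum (fun k : ℤ ↦
      (∫ x in (0 : ℝ)..1, f x * cos (2 * k * π * x)) *
        (∫ x in (0 : ℝ)..1, g x * cos (2 * k * π * x)) +
      (∫ x in (0 : ℝ)..1, f x * sin (2 * k * π * x)) *
        (∫ x in (0 : ℝ)..1, g x * sin (2 * k * π * x))) (∫ x in (0 : ℝ)..1, f x * g x) := by
  have hfi : IntervalIntegrable f volume 0 1 := by
    rw [intervalIntegrable_iff_integrableOn_Ioc_of_le zero_le_one]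
    exact hf.integrable (by norm_num)
  have hgi : IntervalIntegrable g volume 0 1 := by
    rw [intervalIntegrable_iff_integrableOn_Ioc_of_le zero_le_one]
    exact hg.integrable (by norm_num)
  have h := ((hasSum_sq_integral_mul_cos_add_sq_integral_mul_sin (hf.add hg)).sub
    (hasSum_sq_integral_mul_cos_add_sq_integral_mul_sin (hf.sub hg))).mul_left (1 / 4)
  simp only [Pi.add_apply, Pi.sub_apply, add_mul, sub_mul] at h
  convert! h using 1
  · funext k
    have hc {f : ℝ → ℝ} (hf : IntervalIntegrable f volume 0 1) :
        IntervalIntegrable (fun x ↦ f x * cos (2 * k * π * x)) volume 0 1 :=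
      hf.mul_continuousOn (by fun_prop)
    have hs {f : ℝ → ℝ} (hf : IntervalIntegrable f volume 0 1) :
        IntervalIntegrable (fun x ↦ f x * sin (2 * k * π * x)) volume 0 1 :=
      hf.mul_continuousOn (by fun_prop)
    rw [intervalIntegral.integral_add (hc hfi) (hc hgi),
      intervalIntegral.integral_add (hs hfi) (hs hgi),
      intervalIntegral.integral_sub (hc hfi) (hc hgi),
      intervalIntegral.integral_sub (hs hfi) (hs hgi)]
    ring
  · rw [← intervalIntegral.integral_sub, ← intervalIntegral.integral_const_mul]
    · exact intervalIntegral.integral_congr fun x _ ↦ by ring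
    · rw [intervalIntegrable_iff_integrableOn_Ioc_of_le zero_le_one]
      exact (hf.add hg).integrable_sq
    · rw [intervalIntegrable_iff_integrableOn_Ioc_of_le zero_le_one]
      exact (hf.sub hg).integrable_sq


theorem hasSum_nat_integral_mul_cos_mul_add_integral_mul_sin_mul {f g : ℝ → ℝ}
    (hf : MemLp f 2 (volume.restrict (Ioc 0 1))) (hg : MemLp g 2 (volume.restrict (Ioc 0 1)))
    (hf₀ : ∫ x in (0 : ℝ)..1, f x = 0) :
    HasSum (fun k : ℕ ↦ 2 * (
      (∫ x in (0 : ℝ)..1, f x * cos (2 * k * π * x)) *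
        (∫ x in (0 : ℝ)..1, g x * cos (2 * k * π * x)) +
      (∫ x in (0 : ℝ)..1, f x * sin (2 * k * π * x)) *
        (∫ x in (0 : ℝ)..1, g x * sin (2 * k * π * x)))) (∫ x in (0 : ℝ)..1, f x * g x) := by
  have h := (hasSum_integral_mul_cos_mul_add_integral_mul_sin_mul hf hg).nat_add_neg
  simp only [Int.cast_zero, mul_zero, zero_mul, cos_zero, sin_zero, mul_one, hf₀,
    intervalIntegral.integral_zero, add_zero, Int.cast_neg, Int.cast_natCast, mul_neg, neg_mul,
    cos_neg, sin_neg, intervalIntegral.integral_neg, neg_neg] at h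
  simpa only [two_mul] using h

theorem tendsto_integral_mul_cos_mul_sin_atTop {f : ℝ → ℝ} {a b : ℝ} (hab : a ≤ b)
    (hf : IntervalIntegrable f volume a b) :
    Tendsto (fun t : ℝ ↦ ∫ x in a..b, f x * cos (2 * π * (x * t))) atTop (𝓝 0) ∧
    Tendsto (fun t : ℝ ↦ ∫ x in a..b, f x * sin (2 * π * (x * t))) atTop (𝓝 0) := by
  have h := (Real.tendsto_integral_exp_smul_cocompact
    ((Ioc a b).indicator fun x ↦ (f x : ℂ))).mono_left
      (show (atTop : Filter ℝ) ≤ cocompact ℝ from atTop_le_cocompact)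
  have key (t : ℝ) : ∫ v : ℝ, Real.fourierChar (-(v * t)) • (Ioc a b).indicator (fun x ↦ (f x : ℂ)) v =
      ((∫ x in a..b, f x * cos (2 * π * (x * t)) : ℝ) : ℂ) +
        ((-∫ x in a..b, f x * sin (2 * π * (x * t)) : ℝ) : ℂ) * Complex.I := by
    have ofReal {u : ℝ → ℝ} (hu : IntervalIntegrable u volume a b) :
        IntervalIntegrable (fun x ↦ (u x : ℂ)) volume a b := ⟨hu.1.ofReal, hu.2.ofReal⟩
    have hc : IntervalIntegrable (fun x ↦ f x * cos (2 * π * (x * t))) volume a b :=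
      hf.mul_continuousOn (by fun_prop)
    have hs : IntervalIntegrable (fun x ↦ f x * sin (2 * π * (x * t))) volume a b :=
      hf.mul_continuousOn (by fun_prop)
    have hi : (fun v ↦ Real.fourierChar (-(v * t)) • (Ioc a b).indicator (fun x ↦ (f x : ℂ)) v) =
        (Ioc a b).indicator fun v ↦ Real.fourierChar (-(v * t)) • (f v : ℂ) := by
      ext v
      by_cases hv : v ∈ Ioc a b <;> simp [hv]
    rw [hi, integral_indicator measurableSet_Ioc, ← intervalIntegral.integral_of_le hab,
      ← intervalIntegral.integral_neg,
      ← intervalIntegral.integral_ofReal, ← intervalIntegral.integral_ofReal,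
      ← intervalIntegral.integral_mul_const, ← intervalIntegral.integral_add (ofReal hc)
        ((ofReal (u := fun x ↦ -(f x * sin (2 * π * (x * t)))) hs.neg).mul_const _)]
    refine intervalIntegral.integral_congr fun x _ ↦ ?_
    simp only [Circle.smul_def, Real.fourierChar_apply, smul_eq_mul]
    rw [Complex.exp_mul_I, ← Complex.ofReal_cos, ← Complex.ofReal_sin, mul_neg, cos_neg, sin_neg]
    push_cast
    ring
  simp only [key] at h
  have hre := (Complex.continuous_re.tendsto _).comp h
  have him := ((Complex.continuous_im.tendsto _).comp h).neg
  constructor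
  · simpa [Function.comp_def, -Complex.ofReal_neg] using hre
  · simpa [Function.comp_def, -Complex.ofReal_neg] using him

theorem hasDerivAt_log_sinc_pi_mul {x : ℝ} (hx : x ∈ Ioo (0 : ℝ) (1 / 2)) :
    HasDerivAt (fun x ↦ log (sinc (π * x))) (π * cot (π * x) - 1 / x) x := by
  have hπ := pi_pos
  have h0 : 0 < π * x := mul_pos hπ hx.1
  have hs : 0 < sin (π * x) := sin_pos_of_pos_of_lt_pi h0 (by nlinarith [hx.2])
  have h1 : HasDerivAt (fun x ↦ log (sin (π * x)) - log (π * x))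
      (cos (π * x) * (π * 1) / sin (π * x) - π * 1 / (π * x)) x :=
    (((hasDerivAt_id x).const_mul π).sin.log hs.ne').sub
      (((hasDerivAt_id x).const_mul π).log h0.ne')
  have h2 : (fun x ↦ log (sinc (π * x))) =ᶠ[𝓝 x]
      fun x ↦ log (sin (π * x)) - log (π * x) := by
    filter_upwards [isOpen_Ioo.mem_nhds hx] with y hy
    have h0 : 0 < π * y := mul_pos hπ hy.1
    have hs : 0 < sin (π * y) := sin_pos_of_pos_of_lt_pi h0 (by nlinarith [hy.2])
    rw [sinc_of_ne_zero h0.ne', log_div hs.ne' h0.ne']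
  convert! h1.congr_of_eventuallyEq h2 using 1
  rw [cot_eq_cos_div_sin]
  have := hx.1.ne'
  field_simp

theorem continuousOn_log_sinc_pi_mul :
    ContinuousOn (fun x ↦ log (sinc (π * x))) (Icc (0 : ℝ) (1 / 2)) := by
  refine (continuous_sinc.comp (continuous_const.mul continuous_id)).continuousOn.log fun x hx ↦ ?_
  rcases hx.1.eq_or_lt with rfl | h
  · simp
  · have h0 : 0 < π * x := mul_pos pi_pos h
    have hs : 0 < sin (π * x) := sin_pos_of_pos_of_lt_pi h0 (by nlinarith [hx.2, pi_pos])
    change sinc (π * x) ≠ 0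
    rw [sinc_of_ne_zero h0.ne']
    positivity

theorem intervalIntegrable_pi_mul_cot_sub_inv :
    IntervalIntegrable (fun x ↦ π * cot (π * x) - 1 / x) volume 0 (1 / 2) := by
  suffices h : IntegrableOn (fun x ↦ -(π * cot (π * x) - 1 / x)) (Ioc 0 (1 / 2)) by
    rw [intervalIntegrable_iff_integrableOn_Ioc_of_le (by norm_num)]
    exact h.neg.congr_fun (fun x _ ↦ neg_neg _) measurableSet_Ioc
  refine intervalIntegral.integrableOn_deriv_of_nonneg continuousOn_log_sinc_pi_mul.neg
    (fun x hx ↦ (hasDerivAt_log_sinc_pi_mul hx).neg) fun x hx ↦ ?_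
  have h0 : 0 < π * x := mul_pos pi_pos hx.1
  have h1 : π * x < π / 2 := by nlinarith [hx.2, pi_pos]
  have ht := Real.lt_tan h0 h1
  have hx0 := hx.1
  rw [← Real.tan_inv_eq_cot, neg_nonneg, sub_nonpos]
  calc π * (tan (π * x))⁻¹ ≤ π * (π * x)⁻¹ := by gcongr
    _ = 1 / x := by field_simp

theorem integral_pi_mul_cot_sub_inv :
    ∫ x in (0 : ℝ)..1 / 2, (π * cot (π * x) - 1 / x) = log 2 - log π := by
  rw [intervalIntegral.integral_eq_sub_of_hasDerivAt_of_le (by norm_num)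
    continuousOn_log_sinc_pi_mul (fun x hx ↦ hasDerivAt_log_sinc_pi_mul hx)
    intervalIntegrable_pi_mul_cot_sub_inv]
  have : π * (1 / 2) ≠ 0 := by positivity
  rw [sinc_of_ne_zero this, mul_zero, sinc_zero, mul_one_div, sin_pi_div_two, one_div_div,
    log_div two_ne_zero pi_ne_zero]
  simp

theorem one_sub_cos_div_eq_mul_sinc_sq (a x : ℝ) :
    (1 - cos (a * x)) / x = a ^ 2 / 2 * (x * sinc (a / 2 * x) ^ 2) := by
  rcases eq_or_ne (a * x) 0 with h | h
  · rcases mul_eq_zero.1 h with rfl | rfl <;> simp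
  · have ha := left_ne_zero_of_mul h
    have hx := right_ne_zero_of_mul h
    rw [sinc_of_ne_zero (by positivity), show a * x = 2 * (a / 2 * x) by ring, cos_two_mul, cos_sq']
    field_simp
    ring

theorem sin_div_eq_mul_sinc (a : ℝ) {x : ℝ} (hx : x ≠ 0) :
    sin (a * x) / x = a * sinc (a * x) := by
  rcases eq_or_ne a 0 with rfl | ha
  · simp
  · rw [sinc_of_ne_zero (by positivity)]
    field_simp

theorem intervalIntegrable_one_sub_cos_div (a b c : ℝ) :
    IntervalIntegrable (fun x ↦ (1 - cos (a * x)) / x) volume b c := by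
  simp only [one_sub_cos_div_eq_mul_sinc_sq]
  have := continuous_sinc
  exact Continuous.intervalIntegrable (by fun_prop) _ _

theorem intervalIntegrable_sin_div (a : ℝ) (b c : ℝ) :
    IntervalIntegrable (fun x ↦ sin (a * x) / x) volume b c := by
  have := continuous_sinc
  have h : IntervalIntegrable (fun x ↦ a * sinc (a * x)) volume b c :=
    Continuous.intervalIntegrable (by fun_prop) _ _
  refine h.congr_ae (ae_restrict_of_ae ?_)
  filter_upwards [Measure.ae_ne volume (0 : ℝ)] with x hx
  exact (sin_div_eq_mul_sinc a hx).symm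

theorem intervalIntegrable_one_sub_cos_mul_pi_mul_cot (a : ℝ) :
    IntervalIntegrable (fun x ↦ (1 - cos (a * x)) * (π * cot (π * x))) volume 0 (1 / 2) := by
  refine ((intervalIntegrable_pi_mul_cot_sub_inv.continuousOn_mul (g := fun x ↦ 1 - cos (a * x))
    (by fun_prop)).add (intervalIntegrable_one_sub_cos_div a 0 (1 / 2))).congr fun x _ ↦ ?_
  ring

theorem intervalIntegrable_sin_mul_pi_mul_cot (a : ℝ) :
    IntervalIntegrable (fun x ↦ sin (a * x) * (π * cot (π * x))) volume 0 (1 / 2) := by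
  refine ((intervalIntegrable_pi_mul_cot_sub_inv.continuousOn_mul (g := fun x ↦ sin (a * x))
    (by fun_prop)).add (intervalIntegrable_sin_div a 0 (1 / 2))).congr fun x _ ↦ ?_
  ring

theorem integral_sin_mul_zero_half (c : ℝ) :
    ∫ x in (0 : ℝ)..1 / 2, sin (c * x) = (1 - cos (c / 2)) / c := by
  rcases eq_or_ne c 0 with rfl | hc
  · simp
  · rw [intervalIntegral.integral_comp_mul_left _ hc, integral_sin]
    simp only [mul_zero, cos_zero, smul_eq_mul, mul_one_div]
    field_simp

theorem integral_cos_mul_zero_half {c : ℝ} (hc : c ≠ 0) :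
    ∫ x in (0 : ℝ)..1 / 2, cos (c * x) = sin (c / 2) / c := by
  rw [intervalIntegral.integral_comp_mul_left _ hc, integral_cos]
  simp only [mul_zero, sin_zero, smul_eq_mul, mul_one_div]
  field_simp
  simp

theorem integral_one_sub_cos_mul_pi_mul_cot (R : ℕ) :
    ∫ x in (0 : ℝ)..1 / 2, (1 - cos (4 * π * R * x)) * (π * cot (π * x)) =
      2 * (harmonic (2 * R) : ℝ) - harmonic R := by
  induction R with
  | zero => simp
  | succ R ih =>
    have step : (∫ x in (0 : ℝ)..1 / 2, (1 - cos (4 * π * (R + 1 : ℕ) * x)) * (π * cot (π * x))) -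
        ∫ x in (0 : ℝ)..1 / 2, (1 - cos (4 * π * R * x)) * (π * cot (π * x)) =
        2 / (2 * R + 1) := by
      rw [← intervalIntegral.integral_sub (intervalIntegrable_one_sub_cos_mul_pi_mul_cot _)
        (intervalIntegrable_one_sub_cos_mul_pi_mul_cot _)]
      have : ∀ x ∈ Ioo (0 : ℝ) (1 / 2),
          (1 - cos (4 * π * (R + 1 : ℕ) * x)) * (π * cot (π * x)) -
            (1 - cos (4 * π * R * x)) * (π * cot (π * x)) =
          π * (2 * sin (2 * π * (2 * R + 1) * x) + sin (2 * π * (2 * R + 2) * x) +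
            sin (2 * π * (2 * R) * x)) := by
        intro x hx
        have hs : sin (π * x) ≠ 0 := (sin_pos_of_pos_of_lt_pi (mul_pos pi_pos hx.1)
          (by nlinarith [hx.2, pi_pos])).ne'
        set u := π * x with hu
        set b := 2 * π * (2 * R + 1) * x with hb
        rw [show 4 * π * (R + 1 : ℕ) * x = b + 2 * u by push_cast; ring,
          show 4 * π * R * x = b - 2 * u by ring, show 2 * π * (2 * R + 2) * x = b + 2 * u by ring,
          show 2 * π * (2 * R) * x = b - 2 * u by ring, cos_add, cos_sub, sin_add, sin_sub,
          sin_two_mul, cos_two_mul, cot_eq_cos_div_sin]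
        field_simp
        ring
      rw [intervalIntegral.integral_congr_Ioo_of_le (by norm_num) this,
        intervalIntegral.integral_const_mul,
        intervalIntegral.integral_add (Continuous.intervalIntegrable (by fun_prop) _ _)
          (Continuous.intervalIntegrable (by fun_prop) _ _),
        intervalIntegral.integral_add (Continuous.intervalIntegrable (by fun_prop) _ _)
          (Continuous.intervalIntegrable (by fun_prop) _ _), intervalIntegral.integral_const_mul,
        integral_sin_mul_zero_half, integral_sin_mul_zero_half, integral_sin_mul_zero_half,
        show 2 * π * (2 * R + 1) / 2 = π + R * (2 * π) by ring,
        show 2 * π * (2 * R + 2) / 2 = (R + 1 : ℕ) * (2 * π) by push_cast; ring,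
        show 2 * π * (2 * R) / 2 = R * (2 * π) by ring,
        cos_add_nat_mul_two_pi, cos_nat_mul_two_pi, cos_nat_mul_two_pi, cos_pi]
      field_simp
      ring
    rw [sub_eq_iff_eq_add.1 step, ih, show 2 * (R + 1) = 2 * R + 1 + 1 by ring, harmonic_succ,
      harmonic_succ, harmonic_succ]
    push_cast
    field_simp
    ring

theorem integral_sin_mul_pi_mul_cot {R : ℕ} (hR : 1 ≤ R) :
    ∫ x in (0 : ℝ)..1 / 2, sin (4 * π * R * x) * (π * cot (π * x)) = π / 2 := by
  have step (R : ℕ) :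
      (∫ x in (0 : ℝ)..1 / 2, sin (4 * π * (R + 1 : ℕ) * x) * (π * cot (π * x))) -
        ∫ x in (0 : ℝ)..1 / 2, sin (4 * π * R * x) * (π * cot (π * x)) =
        π * ∫ x in (0 : ℝ)..1 / 2, cos (2 * π * (2 * R) * x) := by
    rw [← intervalIntegral.integral_sub (intervalIntegrable_sin_mul_pi_mul_cot _)
      (intervalIntegrable_sin_mul_pi_mul_cot _)]
    have : ∀ x ∈ Ioo (0 : ℝ) (1 / 2),
        sin (4 * π * (R + 1 : ℕ) * x) * (π * cot (π * x)) -
          sin (4 * π * R * x) * (π * cot (π * x)) =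
        π * (2 * cos (2 * π * (2 * R + 1) * x) + cos (2 * π * (2 * R + 2) * x) +
          cos (2 * π * (2 * R) * x)) := by
      intro x hx
      have hs : sin (π * x) ≠ 0 := (sin_pos_of_pos_of_lt_pi (mul_pos pi_pos hx.1)
        (by nlinarith [hx.2, pi_pos])).ne'
      set u := π * x with hu
      set b := 2 * π * (2 * R + 1) * x with hb
      rw [show 4 * π * (R + 1 : ℕ) * x = b + 2 * u by push_cast; ring,
        show 4 * π * R * x = b - 2 * u by ring, show 2 * π * (2 * R + 2) * x = b + 2 * u by ring,
        show 2 * π * (2 * R) * x = b - 2 * u by ring, cos_add, cos_sub, sin_add, sin_sub,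
        sin_two_mul, cos_two_mul, cot_eq_cos_div_sin]
      field_simp
      ring
    rw [intervalIntegral.integral_congr_Ioo_of_le (by norm_num) this,
      intervalIntegral.integral_const_mul,
      intervalIntegral.integral_add (Continuous.intervalIntegrable (by fun_prop) _ _)
        (Continuous.intervalIntegrable (by fun_prop) _ _),
      intervalIntegral.integral_add (Continuous.intervalIntegrable (by fun_prop) _ _)
        (Continuous.intervalIntegrable (by fun_prop) _ _), intervalIntegral.integral_const_mul,
      integral_cos_mul_zero_half (c := 2 * π * (2 * R + 1)) (by positivity),
      integral_cos_mul_zero_half (c := 2 * π * (2 * R + 2)) (by positivity),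
      show 2 * π * (2 * R + 1) / 2 = (2 * R + 1 : ℕ) * π by push_cast; ring,
      show 2 * π * (2 * R + 2) / 2 = (2 * R + 2 : ℕ) * π by push_cast; ring,
      sin_nat_mul_pi, sin_nat_mul_pi]
    simp
  induction R, hR using Nat.le_induction with
  | base =>
    have := step 0
    simp at this ⊢
    linarith
  | succ R hR ih =>
    have hR' : (R : ℝ) ≠ 0 := by positivity
    rw [sub_eq_iff_eq_add.1 (step R), ih, integral_cos_mul_zero_half (by positivity),
      show 2 * π * (2 * R) / 2 = (2 * R : ℕ) * π by push_cast; ring, sin_nat_mul_pi]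
    simp

theorem tendsto_integral_one_sub_cos_div_sub_log :
    Tendsto (fun R : ℕ ↦ (∫ x in (0 : ℝ)..1 / 2, (1 - cos (4 * π * R * x)) / x) - log R) atTop
      (𝓝 (log (2 * π) + eulerMascheroniConstant)) := by
  have hf := intervalIntegrable_pi_mul_cot_sub_inv
  have hRL := (tendsto_integral_mul_cos_mul_sin_atTop (by norm_num) hf).1.comp
    (tendsto_natCast_atTop_atTop (R := ℝ) |>.const_mul_atTop (zero_lt_two' ℝ))
  have hH := tendsto_harmonic_sub_log
  have hH2 := hH.comp (tendsto_id.const_mul_atTop' (zero_lt_two' ℕ))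
  have hlim := (((hH2.const_mul 2).sub hH).add_const (2 * log 2 - (log 2 - log π))).add hRL
  rw [log_mul two_ne_zero pi_ne_zero]
  convert (hlim.congr' ?_) using 2
  · ring
  filter_upwards [eventually_ne_atTop 0] with R hR
  have hR' : (R : ℝ) ≠ 0 := by positivity
  have hK := integral_one_sub_cos_mul_pi_mul_cot R
  have e1 : (∫ x in (0 : ℝ)..1 / 2, (1 - cos (4 * π * R * x)) / x) =
      (∫ x in (0 : ℝ)..1 / 2, (1 - cos (4 * π * R * x)) * (π * cot (π * x))) -
      ((∫ x in (0 : ℝ)..1 / 2, (π * cot (π * x) - 1 / x)) -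
        ∫ x in (0 : ℝ)..1 / 2, (π * cot (π * x) - 1 / x) * cos (2 * π * (x * (2 * R)))) := by
    have hc : IntervalIntegrable
        (fun x ↦ (π * cot (π * x) - 1 / x) * cos (2 * π * (x * (2 * R)))) volume 0 (1 / 2) :=
      hf.mul_continuousOn (by fun_prop)
    rw [← intervalIntegral.integral_sub hf hc, ← intervalIntegral.integral_sub
      (intervalIntegrable_one_sub_cos_mul_pi_mul_cot _) (hf.sub hc)]
    refine intervalIntegral.integral_congr fun x _ ↦ ?_
    rw [show 4 * π * R * x = 2 * π * (x * (2 * R)) by ring]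
    ring
  rw [e1, hK, integral_pi_mul_cot_sub_inv]
  simp only [Function.comp_apply, id_eq]
  push_cast
  rw [log_mul two_ne_zero hR']
  ring

theorem tendsto_integral_sin_div :
    Tendsto (fun R : ℕ ↦ ∫ x in (0 : ℝ)..1 / 2, sin (4 * π * R * x) / x) atTop (𝓝 (π / 2)) := by
  have hf := intervalIntegrable_pi_mul_cot_sub_inv
  have hRL := (tendsto_integral_mul_cos_mul_sin_atTop (by norm_num) hf).2.comp
    (tendsto_natCast_atTop_atTop (R := ℝ) |>.const_mul_atTop (zero_lt_two' ℝ))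
  have hlim := hRL.const_sub (π / 2)
  rw [sub_zero] at hlim
  refine hlim.congr' ?_
  filter_upwards [eventually_ge_atTop 1] with R hR
  have hs : IntervalIntegrable
      (fun x ↦ (π * cot (π * x) - 1 / x) * sin (2 * π * (x * (2 * R)))) volume 0 (1 / 2) :=
    hf.mul_continuousOn (by fun_prop)
  rw [← integral_sin_mul_pi_mul_cot hR, Function.comp_apply, ← intervalIntegral.integral_sub
    (intervalIntegrable_sin_mul_pi_mul_cot _) hs]
  refine intervalIntegral.integral_congr fun x _ ↦ ?_
  rw [show 4 * π * R * x = 2 * π * (x * (2 * R)) by ring]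
  ring

theorem integral_log_mul_sin {k M : ℕ} (hk : k ≠ 0) (hM : M ≠ 0) :
    ∫ t in (0 : ℝ)..M, log t * sin (2 * k * π * t) =
      -(∫ x in (0 : ℝ)..1 / 2, (1 - cos (4 * π * (k * M : ℕ) * x)) / x) / (2 * k * π) := by
  set a := 2 * k * π with ha
  have ha0 : a ≠ 0 := by positivity
  have hM0 : (M : ℝ) ≠ 0 := by positivity
  have hi1 : IntervalIntegrable (fun t ↦ (1 - cos (a * t)) / t / a) volume 0 M :=
    (intervalIntegrable_one_sub_cos_div a 0 M).div_const a
  have hi2 : IntervalIntegrable (fun t ↦ log t * sin (a * t)) volume 0 M :=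
    intervalIntegral.intervalIntegrable_log'.mul_continuousOn (by fun_prop)
  have hF : Continuous fun t ↦ log t * ((1 - cos (a * t)) / a) := by
    have h : (fun t ↦ log t * ((1 - cos (a * t)) / a)) =
        fun t ↦ t * log t * (a ^ 2 / 2 * (t * sinc (a / 2 * t) ^ 2)) / a := by
      ext t
      rw [← one_sub_cos_div_eq_mul_sinc_sq]
      rcases eq_or_ne t 0 with rfl | ht
      · simp
      · field_simp
    rw [h]
    have := continuous_sinc
    have := continuous_mul_log
    fun_prop
  have hFTC := intervalIntegral.integral_eq_sub_of_hasDerivAt_of_le (Nat.cast_nonneg M)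
    hF.continuousOn (f' := fun t ↦ (1 - cos (a * t)) / t / a + log t * sin (a * t)) (fun t ht ↦ by
      convert! (hasDerivAt_log ht.1.ne').mul
        ((((hasDerivAt_id t).const_mul a).cos.const_sub 1).div_const a) using 1
      simp only [id_eq]
      field_simp) (hi1.add hi2)
  rw [intervalIntegral.integral_add hi1 hi2, intervalIntegral.integral_div,
    show a * M = (k * M : ℕ) * (2 * π) by push_cast; ring, cos_nat_mul_two_pi] at hFTC
  have hsub : ∫ x in (0 : ℝ)..1 / 2, (1 - cos (4 * π * (k * M : ℕ) * x)) / x =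
      ∫ t in (0 : ℝ)..M, (1 - cos (a * t)) / t := by
    have h := intervalIntegral.mul_integral_comp_mul_left (a := 0) (b := 1 / 2)
      (f := fun t ↦ (1 - cos (a * t)) / t) (2 * M : ℝ)
    rw [mul_zero, show (2 * M : ℝ) * (1 / 2) = M by ring] at h
    rw [← h, ← intervalIntegral.integral_const_mul]
    refine intervalIntegral.integral_congr fun x _ ↦ ?_
    rw [show 4 * π * (k * M : ℕ) * x = a * (2 * M * x) by push_cast; ring]
    rcases eq_or_ne x 0 with rfl | hx
    · simp
    · field_simp
  rw [hsub, eq_comm, neg_div, neg_eq_iff_add_eq_zero, hFTC]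
  simp

theorem integral_log_mul_cos {k M : ℕ} (hk : k ≠ 0) (hM : M ≠ 0) :
    ∫ t in (0 : ℝ)..M, log t * cos (2 * k * π * t) =
      -(∫ x in (0 : ℝ)..1 / 2, sin (4 * π * (k * M : ℕ) * x) / x) / (2 * k * π) := by
  set a := 2 * k * π with ha
  have ha0 : a ≠ 0 := by positivity
  have hM0 : (M : ℝ) ≠ 0 := by positivity
  have hi1 : IntervalIntegrable (fun t ↦ sin (a * t) / t / a) volume 0 M :=
    (intervalIntegrable_sin_div a 0 M).div_const a
  have hi2 : IntervalIntegrable (fun t ↦ log t * cos (a * t)) volume 0 M :=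
    intervalIntegral.intervalIntegrable_log'.mul_continuousOn (by fun_prop)
  have hF : Continuous fun t ↦ log t * (sin (a * t) / a) := by
    have h : (fun t ↦ log t * (sin (a * t) / a)) = fun t ↦ t * log t * sinc (a * t) := by
      ext t
      rcases eq_or_ne t 0 with rfl | ht
      · simp
      · rw [sinc_of_ne_zero (by positivity)]
        field_simp
    rw [h]
    have := continuous_sinc
    have := continuous_mul_log
    fun_prop
  have hFTC := intervalIntegral.integral_eq_sub_of_hasDerivAt_of_le (Nat.cast_nonneg M)
    hF.continuousOn (f' := fun t ↦ sin (a * t) / t / a + log t * cos (a * t)) (fun t ht ↦ by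
      convert! (hasDerivAt_log ht.1.ne').mul
        (((hasDerivAt_id t).const_mul a).sin.div_const a) using 1
      simp only [id_eq]
      field_simp) (hi1.add hi2)
  rw [intervalIntegral.integral_add hi1 hi2, intervalIntegral.integral_div,
    show a * M = (2 * k * M : ℕ) * π by push_cast; ring, sin_nat_mul_pi] at hFTC
  have hsub : ∫ x in (0 : ℝ)..1 / 2, sin (4 * π * (k * M : ℕ) * x) / x =
      ∫ t in (0 : ℝ)..M, sin (a * t) / t := by
    have h := intervalIntegral.mul_integral_comp_mul_left (a := 0) (b := 1 / 2)
      (f := fun t ↦ sin (a * t) / t) (2 * M : ℝ)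
    rw [mul_zero, show (2 * M : ℝ) * (1 / 2) = M by ring] at h
    rw [← h, ← intervalIntegral.integral_const_mul]
    refine intervalIntegral.integral_congr fun x _ ↦ ?_
    rw [show 4 * π * (k * M : ℕ) * x = a * (2 * M * x) by push_cast; ring]
    rcases eq_or_ne x 0 with rfl | hx
    · simp
    · field_simp
  rw [hsub, eq_comm, neg_div, neg_eq_iff_add_eq_zero, hFTC]
  simp

theorem memLp_two_log : MemLp log 2 (volume.restrict (Ioc (0 : ℝ) 1)) := by
  rw [memLp_two_iff_integrable_sq measurable_log.aestronglyMeasurable]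
  have hF : ContinuousOn
      (fun x ↦ 4 * (√x * log √x) ^ 2 - 2 * (x * log x) + 2 * x) (Icc (0 : ℝ) 1) := by
    have h1 := continuous_mul_log
    have h2 : Continuous fun x ↦ √x * log √x := h1.comp continuous_sqrt
    exact Continuous.continuousOn (by fun_prop)
  refine intervalIntegral.integrableOn_deriv_of_nonneg
    (g := fun x ↦ x * log x ^ 2 - 2 * (x * log x) + 2 * x) (hF.congr fun x hx ↦ ?_)
    (fun x hx ↦ ?_) fun x _ ↦ sq_nonneg _
  · simp only
    rw [log_sqrt hx.1, mul_pow, sq_sqrt hx.1]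
    ring
  · have hl := hasDerivAt_log hx.1.ne'
    have hx0 := hx.1.ne'
    convert! (((hasDerivAt_id x).mul (hl.pow 2)).sub
      (((hasDerivAt_id x).mul hl).const_mul 2)).add ((hasDerivAt_id x).const_mul 2) using 1
    simp only [id_eq, Pi.pow_apply]
    field_simp
    ring

theorem memLp_two_log_Gamma :
    MemLp (fun x ↦ log (Gamma x)) 2 (volume.restrict (Ioc (0 : ℝ) 1)) := by
  have hc : ContinuousOn (fun x : ℝ ↦ log (Gamma (x + 1))) (Icc 0 1) := by
    refine ContinuousOn.log (fun x hx ↦ ?_) fun x hx ↦ (Gamma_pos_of_pos (by linarith [hx.1])).ne'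
    refine ContinuousAt.continuousWithinAt ?_
    refine ContinuousAt.comp (f := fun x : ℝ ↦ x + 1) (g := Gamma) ?_ (by fun_prop)
    refine (differentiableAt_Gamma fun m ↦ ?_).continuousAt
    have := hx.1
    have : (0 : ℝ) ≤ m := m.cast_nonneg
    linarith
  obtain ⟨B, hB⟩ := isCompact_Icc.exists_bound_of_continuousOn hc
  have h1 : MemLp (fun x : ℝ ↦ log (Gamma (x + 1))) 2 (volume.restrict (Ioc (0 : ℝ) 1)) :=
    MemLp.of_bound ((hc.mono Ioc_subset_Icc_self).aestronglyMeasurable measurableSet_Ioc) B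
      ((ae_restrict_mem measurableSet_Ioc).mono fun x hx ↦ hB x (Ioc_subset_Icc_self hx))
  refine (h1.sub memLp_two_log).ae_eq ((ae_restrict_mem measurableSet_Ioc).mono fun x hx ↦ ?_)
  simp only [Pi.sub_apply]
  rw [Gamma_add_one hx.1.ne', log_mul hx.1.ne' (Gamma_pos_of_pos hx.1).ne']
  ring

theorem intervalIntegrable_log_Gamma :
    IntervalIntegrable (fun x ↦ log (Gamma x)) volume 0 1 := by
  rw [intervalIntegrable_iff_integrableOn_Ioc_of_le zero_le_one]
  exact memLp_two_log_Gamma.integrable (by norm_num)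

theorem abs_logGammaSeq_sub_log_Gamma_le {x : ℝ} (hx : x ∈ Ioc (0 : ℝ) 1) {N : ℕ} (hN : N ≠ 0) :
    |BohrMollerup.logGammaSeq x N - log (Gamma x)| ≤ log 2 := by
  have hfeq : ∀ {y : ℝ}, 0 < y → (log ∘ Gamma) (y + 1) = (log ∘ Gamma) y + log y := fun {y} hy ↦ by
    rw [Function.comp_apply, Gamma_add_one hy.ne', log_mul hy.ne' (Gamma_pos_of_pos hy).ne',
      add_comm, Function.comp_apply]
  have h1 := BohrMollerup.ge_logGammaSeq convexOn_log_Gamma hfeq hx.1 hN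
  have h2 := BohrMollerup.le_logGammaSeq convexOn_log_Gamma hfeq hx.1 hx.2 N
  simp only [Function.comp_apply, Gamma_one, log_one, zero_add] at h1 h2
  have hN1 : (1 : ℝ) ≤ N := by exact_mod_cast Nat.one_le_iff_ne_zero.2 hN
  have h3 : log (N + 1) ≤ log 2 + log N := by
    rw [← log_mul two_ne_zero (by positivity)]
    exact log_le_log (by positivity) (by linarith)
  have h4 : log N ≤ log (N + 1) := log_le_log (by positivity) (by linarith)
  rw [abs_le]
  constructor <;> nlinarith [hx.1, hx.2]

theorem tendsto_integral_logGammaSeq_mul {φ : ℝ → ℝ} (hφ : Continuous φ) :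
    Tendsto (fun N ↦ ∫ x in (0 : ℝ)..1, BohrMollerup.logGammaSeq x N * φ x) atTop
      (𝓝 (∫ x in (0 : ℝ)..1, log (Gamma x) * φ x)) := by
  refine intervalIntegral.tendsto_integral_filter_of_dominated_convergence
    (fun x ↦ (log 2 + |log (Gamma x)|) * |φ x|) (.of_forall fun N ↦ ?_) ?_ ?_ ?_
  · refine Measurable.aestronglyMeasurable (Measurable.mul ?_ hφ.measurable)
    unfold BohrMollerup.logGammaSeq
    fun_prop
  · filter_upwards [eventually_ne_atTop 0] with N hN
    refine .of_forall fun x hx ↦ ?_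
    rw [uIoc_of_le zero_le_one] at hx
    rw [norm_mul, norm_eq_abs, norm_eq_abs]
    gcongr
    have h1 := abs_logGammaSeq_sub_log_Gamma_le hx hN
    have h2 := abs_sub_abs_le_abs_sub (BohrMollerup.logGammaSeq x N) (log (Gamma x))
    linarith
  · exact (intervalIntegrable_const.add intervalIntegrable_log_Gamma.abs).mul_continuousOn
      (by fun_prop)
  · refine .of_forall fun x hx ↦ ?_
    rw [uIoc_of_le zero_le_one] at hx
    exact (BohrMollerup.tendsto_log_gamma hx.1).mul_const _

theorem integral_logGammaSeq_mul {φ : ℝ → ℝ} (hφ : Continuous φ) (hp : Function.Periodic φ 1)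
    (N : ℕ) :
    ∫ x in (0 : ℝ)..1, BohrMollerup.logGammaSeq x N * φ x =
      log N * (∫ x in (0 : ℝ)..1, x * φ x) + log N.factorial * (∫ x in (0 : ℝ)..1, φ x) -
        ∫ t in (0 : ℝ)..(N + 1 : ℕ), log t * φ t := by
  have hlog (b c : ℝ) : IntervalIntegrable (fun t ↦ log t * φ t) volume b c :=
    intervalIntegral.intervalIntegrable_log'.mul_continuousOn hφ.continuousOn
  have hterm (m : ℕ) (x : ℝ) : log (x + m) * φ x = log (x + m) * φ (x + m) := by
    rw [← mul_one (m : ℝ), hp.nat_mul m x]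
  have hint (m : ℕ) : IntervalIntegrable (fun x ↦ log (x + m) * φ x) volume 0 1 := by
    simp only [hterm]
    simpa using (hlog m (1 + m)).comp_add_right (m : ℝ)
  have hadj := intervalIntegral.sum_integral_adjacent_intervals (μ := volume) (n := N + 1)
    (a := fun m : ℕ ↦ (m : ℝ)) fun m _ ↦ hlog m (m + 1 : ℕ)
  have hsum : ∑ m ∈ Finset.range (N + 1), ∫ x in (0 : ℝ)..1, log (x + m) * φ x =
      ∫ t in (0 : ℝ)..(N + 1 : ℕ), log t * φ t := by
    rw [Nat.cast_zero] at hadj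
    rw [← hadj]
    refine Finset.sum_congr rfl fun m _ ↦ ?_
    simp only [hterm]
    rw [intervalIntegral.integral_comp_add_right fun t ↦ log t * φ t]
    simp [add_comm]
  rw [← hsum, ← intervalIntegral.integral_finsetSum fun m _ ↦ hint m,
    ← intervalIntegral.integral_const_mul, ← intervalIntegral.integral_const_mul,
    ← intervalIntegral.integral_add, ← intervalIntegral.integral_sub]
  · refine intervalIntegral.integral_congr fun x _ ↦ ?_
    simp only [BohrMollerup.logGammaSeq, sub_mul, add_mul, Finset.sum_mul]
    ring
  · exact Continuous.intervalIntegrable (by fun_prop) _ _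
  · convert! IntervalIntegrable.sum (Finset.range (N + 1)) fun m _ ↦ hint m using 1
    ext x
    rw [Finset.sum_apply]
  · exact Continuous.intervalIntegrable (by fun_prop) _ _
  · exact Continuous.intervalIntegrable (by fun_prop) _ _

theorem integral_mul_sin_two_int_mul_pi (j : ℤ) :
    ∫ x in (0 : ℝ)..1, x * sin (2 * j * π * x) = -1 / (2 * j * π) := by
  rcases eq_or_ne j 0 with rfl | hj
  · simp
  have hj' : (j : ℝ) ≠ 0 := by exact_mod_cast hj
  set c := 2 * j * π with hc
  have hc0 : c ≠ 0 := by positivity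
  rw [intervalIntegral.integral_eq_sub_of_hasDerivAt
    (f := fun x ↦ -(x * cos (c * x)) / c + sin (c * x) / c ^ 2) (fun x _ ↦ ?_)
    (Continuous.intervalIntegrable (by fun_prop) _ _)]
  · have h1 : cos c = 1 := by
      rw [show c = j * (2 * π) by ring]
      exact cos_int_mul_two_pi j
    have h2 : sin c = 0 := by
      rw [show c = (2 * j : ℤ) * π by push_cast; ring]
      exact sin_int_mul_pi _
    simp [h1, h2]
  · have hl := (hasDerivAt_id x).const_mul c
    convert! ((((hasDerivAt_id x).mul hl.cos).neg).div_const c).add (hl.sin.div_const (c ^ 2))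
      using 1
    simp only [id_eq]
    field_simp
    ring

theorem integral_mul_cos_two_int_mul_pi {j : ℤ} (hj : j ≠ 0) :
    ∫ x in (0 : ℝ)..1, x * cos (2 * j * π * x) = 0 := by
  have hj' : (j : ℝ) ≠ 0 := by exact_mod_cast hj
  set c := 2 * j * π with hc
  have hc0 : c ≠ 0 := by positivity
  rw [intervalIntegral.integral_eq_sub_of_hasDerivAt
    (f := fun x ↦ x * sin (c * x) / c + cos (c * x) / c ^ 2) (fun x _ ↦ ?_)
    (Continuous.intervalIntegrable (by fun_prop) _ _)]
  · have h1 : cos c = 1 := by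
      rw [show c = j * (2 * π) by ring]
      exact cos_int_mul_two_pi j
    have h2 : sin c = 0 := by
      rw [show c = (2 * j : ℤ) * π by push_cast; ring]
      exact sin_int_mul_pi _
    simp [h1, h2]
  · have hl := (hasDerivAt_id x).const_mul c
    convert! (((hasDerivAt_id x).mul hl.sin).div_const c).add (hl.cos.div_const (c ^ 2))
      using 1
    simp only [id_eq]
    field_simp
    ring

theorem integral_mul_sin_two_nat_mul_pi (k : ℕ) :
    ∫ x in (0 : ℝ)..1, x * sin (2 * k * π * x) = -1 / (2 * k * π) := by
  simpa using integral_mul_sin_two_int_mul_pi k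

theorem integral_mul_cos_two_nat_mul_pi {k : ℕ} (hk : k ≠ 0) :
    ∫ x in (0 : ℝ)..1, x * cos (2 * k * π * x) = 0 := by
  simpa using integral_mul_cos_two_int_mul_pi (j := k) (by exact_mod_cast hk)

theorem integral_sq_mul_cos_two_nat_mul_pi {n : ℕ} (hn : n ≠ 0) :
    ∫ x in (0 : ℝ)..1, x * cos (2 * n * π * x) * x = 1 / (2 * π ^ 2 * n ^ 2) := by
  set c := 2 * n * π with hc
  have hc0 : c ≠ 0 := by positivity
  rw [intervalIntegral.integral_eq_sub_of_hasDerivAt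
    (f := fun x ↦ x ^ 2 * sin (c * x) / c + 2 * (x * cos (c * x)) / c ^ 2 -
      2 * sin (c * x) / c ^ 3) (fun x _ ↦ ?_) (Continuous.intervalIntegrable (by fun_prop) _ _)]
  · have h1 : cos c = 1 := by
      rw [show c = n * (2 * π) by ring]
      exact cos_nat_mul_two_pi n
    have h2 : sin c = 0 := by
      rw [show c = (2 * n : ℕ) * π by push_cast; ring]
      exact sin_nat_mul_pi _
    simp only [mul_one, mul_zero, h1, h2, sin_zero]
    rw [hc]
    field_simp
    norm_num
  · have hl := (hasDerivAt_id x).const_mul c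
    convert! ((((hasDerivAt_id x).pow 2).mul hl.sin).div_const c).add
      ((((hasDerivAt_id x).mul hl.cos).const_mul 2).div_const (c ^ 2)) |>.sub
      ((hl.sin.const_mul 2).div_const (c ^ 3)) using 1
    simp only [id_eq, Pi.pow_apply]
    field_simp
    ring

theorem integral_log_Gamma_mul_sin {k : ℕ} (hk : k ≠ 0) :
    ∫ x in (0 : ℝ)..1, log (Gamma x) * sin (2 * k * π * x) =
      (log (2 * π) + eulerMascheroniConstant + log k) / (2 * k * π) := by
  have hφ : Continuous fun x ↦ sin (2 * k * π * x) := by fun_prop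
  have hp : Function.Periodic (fun x ↦ sin (2 * k * π * x)) 1 := fun x ↦ by
    simp only
    rw [show 2 * k * π * (x + 1) = 2 * k * π * x + k * (2 * π) by ring, sin_add_nat_mul_two_pi]
  have hint : ∫ x in (0 : ℝ)..1, sin (2 * k * π * x) = 0 := by
    rw [intervalIntegral.integral_comp_mul_left _ (by positivity), integral_sin,
      show 2 * k * π * 1 = k * (2 * π) by ring, cos_nat_mul_two_pi]
    simp
  refine tendsto_nhds_unique (tendsto_integral_logGammaSeq_mul hφ) ?_
  have hshift : Tendsto (fun N : ℕ ↦ k * (N + 1)) atTop atTop :=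
    (tendsto_add_atTop_nat 1).const_mul_atTop' (Nat.pos_of_ne_zero hk)
  have hdiff : Tendsto (fun N : ℕ ↦ log ((N : ℝ) + 1) - log N) atTop (𝓝 0) :=
    (tendsto_log_comp_add_sub_log 1).comp tendsto_natCast_atTop_atTop
  have hlim := (((tendsto_integral_one_sub_cos_div_sub_log.comp hshift).add_const (log k)).add
    hdiff).div_const (2 * k * π)
  rw [add_zero] at hlim
  refine hlim.congr fun N ↦ ?_
  rw [integral_logGammaSeq_mul hφ hp, hint, integral_mul_sin_two_nat_mul_pi,
    integral_log_mul_sin hk N.succ_ne_zero]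
  simp only [Function.comp_apply]
  have hk' : (k : ℝ) ≠ 0 := by positivity
  have hN : (N : ℝ) + 1 ≠ 0 := by positivity
  rw [show log ((k * (N + 1) : ℕ) : ℝ) = log k + log ((N : ℝ) + 1) by
    push_cast
    exact log_mul hk' hN]
  ring

theorem integral_log_Gamma_mul_cos {k : ℕ} (hk : k ≠ 0) :
    ∫ x in (0 : ℝ)..1, log (Gamma x) * cos (2 * k * π * x) = 1 / (4 * k) := by
  have hφ : Continuous fun x ↦ cos (2 * k * π * x) := by fun_prop
  have hp : Function.Periodic (fun x ↦ cos (2 * k * π * x)) 1 := fun x ↦ by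
    simp only
    rw [show 2 * k * π * (x + 1) = 2 * k * π * x + k * (2 * π) by ring, cos_add_nat_mul_two_pi]
  have hint : ∫ x in (0 : ℝ)..1, cos (2 * k * π * x) = 0 := by
    rw [intervalIntegral.integral_comp_mul_left _ (by positivity), integral_cos,
      show 2 * k * π * 1 = (2 * k : ℕ) * π by push_cast; ring, sin_nat_mul_pi]
    simp
  refine tendsto_nhds_unique (tendsto_integral_logGammaSeq_mul hφ) ?_
  have hshift : Tendsto (fun N : ℕ ↦ k * (N + 1)) atTop atTop :=
    (tendsto_add_atTop_nat 1).const_mul_atTop' (Nat.pos_of_ne_zero hk)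
  have hlim := (tendsto_integral_sin_div.comp hshift).div_const (2 * k * π)
  rw [show π / 2 / (2 * k * π) = 1 / (4 * k) by field_simp; norm_num] at hlim
  refine hlim.congr fun N ↦ ?_
  rw [integral_logGammaSeq_mul hφ hp, hint, integral_mul_cos_two_nat_mul_pi hk,
    integral_log_mul_cos hk N.succ_ne_zero]
  simp only [Function.comp_apply]
  ring

theorem integral_mul_cos_mul_cos {n : ℕ} (hn : n ≠ 0) (k : ℕ) :
    ∫ x in (0 : ℝ)..1, x * cos (2 * n * π * x) * cos (2 * k * π * x) =
      if k = n then 1 / 4 else 0 := by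
  have h : ∀ x : ℝ, x * cos (2 * n * π * x) * cos (2 * k * π * x) =
      (x * cos (2 * (n - k : ℤ) * π * x) + x * cos (2 * (n + k : ℤ) * π * x)) / 2 := fun x ↦ by
    rw [show 2 * (n - k : ℤ) * π * x = 2 * n * π * x - 2 * k * π * x by push_cast; ring,
      show 2 * (n + k : ℤ) * π * x = 2 * n * π * x + 2 * k * π * x by push_cast; ring,
      cos_sub, cos_add]
    ring
  simp only [h]
  rw [intervalIntegral.integral_div, intervalIntegral.integral_add
    (Continuous.intervalIntegrable (by fun_prop) _ _)
    (Continuous.intervalIntegrable (by fun_prop) _ _),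
    integral_mul_cos_two_int_mul_pi (j := n + k) (by lia)]
  split_ifs with hk
  · subst hk
    norm_num
  · rw [integral_mul_cos_two_int_mul_pi (by lia)]
    simp

theorem integral_mul_cos_mul_sin (n k : ℕ) :
    ∫ x in (0 : ℝ)..1, x * cos (2 * n * π * x) * sin (2 * k * π * x) =
      -(1 / ((k : ℝ) + n) + 1 / ((k : ℝ) - n)) / (4 * π) := by
  have h : ∀ x : ℝ, x * cos (2 * n * π * x) * sin (2 * k * π * x) =
      (x * sin (2 * (k - n : ℤ) * π * x) + x * sin (2 * (k + n : ℤ) * π * x)) / 2 := fun x ↦ by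
    rw [show 2 * (k - n : ℤ) * π * x = 2 * k * π * x - 2 * n * π * x by push_cast; ring,
      show 2 * (k + n : ℤ) * π * x = 2 * k * π * x + 2 * n * π * x by push_cast; ring,
      sin_sub, sin_add]
    ring
  simp only [h]
  rw [intervalIntegral.integral_div, intervalIntegral.integral_add
    (Continuous.intervalIntegrable (by fun_prop) _ _)
    (Continuous.intervalIntegrable (by fun_prop) _ _),
    integral_mul_sin_two_int_mul_pi, integral_mul_sin_two_int_mul_pi]
  push_cast
  simp only [div_eq_mul_inv, mul_inv]
  ring

/-- For every positive integer `n`, the `n`-th Fourier cosine coefficient of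
`x·log Γ(x)` on `(0,1)`:
`2·∫₀¹ x·log Γ(x)·cos(2nπx) dx = 1/(4n) − C/(π²n²) − log n/(4π²n²) − T_n/π²`,
where `C = log(2π) + γ` and `T_n = ∑_{i ≥ 2, i ≠ n} log i/(i² − n²)`. -/
theorem fourier_cos_coeff_x_mul_log_Gamma (n : ℕ) (hn : 0 < n) :
    2 * ∫ x in (0:ℝ)..1, x * Real.log (Real.Gamma x) * Real.cos (2 * n * π * x) =
      1 / (4 * (n : ℝ)) - (Real.log (2 * π) + Real.eulerMascheroniConstant) / (π ^ 2 * n ^ 2)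
        - Real.log n / (4 * π ^ 2 * n ^ 2)
        - (∑' i : ℕ, if i < 2 ∨ i = n then 0
            else Real.log i / ((i : ℝ) ^ 2 - (n : ℝ) ^ 2)) / π ^ 2 := by
  have hn0 : n ≠ 0 := hn.ne'
  set C := log (2 * π) + eulerMascheroniConstant with hC
  set T : ℕ → ℝ := fun i ↦ if i < 2 ∨ i = n then 0 else log i / ((i : ℝ) ^ 2 - (n : ℝ) ^ 2) with hT
  have hcont {u : ℝ → ℝ} (hu : Continuous u) : MemLp u 2 (volume.restrict (Ioc (0 : ℝ) 1)) := by
    obtain ⟨B, hB⟩ := isCompact_Icc.exists_bound_of_continuousOn (hu.continuousOn (s := Icc 0 1))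
    exact MemLp.of_bound hu.aestronglyMeasurable B
      ((ae_restrict_mem measurableSet_Ioc).mono fun x hx ↦ hB x (Ioc_subset_Icc_self hx))
  -- Adding `C * x` to `log Γ` removes the constant `C` from all the sine coefficients.
  have hsum := hasSum_nat_integral_mul_cos_mul_add_integral_mul_sin_mul
    (hcont (u := fun x ↦ x * cos (2 * n * π * x)) (by fun_prop))
    (memLp_two_log_Gamma.add (hcont (u := fun x ↦ C * x) (by fun_prop)))
    (integral_mul_cos_two_nat_mul_pi hn0)
  have hval : ∫ x in (0 : ℝ)..1, x * cos (2 * n * π * x) *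
      ((fun x ↦ log (Gamma x)) + fun x ↦ C * x) x =
      (∫ x in (0 : ℝ)..1, x * log (Gamma x) * cos (2 * n * π * x)) +
        C * (1 / (2 * π ^ 2 * n ^ 2)) := by
    rw [← integral_sq_mul_cos_two_nat_mul_pi hn0, ← intervalIntegral.integral_const_mul,
      ← intervalIntegral.integral_add]
    · refine intervalIntegral.integral_congr fun x _ ↦ ?_
      simp only [Pi.add_apply]
      ring
    · exact (intervalIntegrable_log_Gamma.continuousOn_mul (by fun_prop)).mul_continuousOn
        (by fun_prop)
    · exact Continuous.intervalIntegrable (by fun_prop) _ _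
  have hterm (k : ℕ) : 2 * (
      (∫ x in (0 : ℝ)..1, x * cos (2 * n * π * x) * cos (2 * k * π * x)) *
        (∫ x in (0 : ℝ)..1, ((fun x ↦ log (Gamma x)) + fun x ↦ C * x) x * cos (2 * k * π * x)) +
      (∫ x in (0 : ℝ)..1, x * cos (2 * n * π * x) * sin (2 * k * π * x)) *
        (∫ x in (0 : ℝ)..1, ((fun x ↦ log (Gamma x)) + fun x ↦ C * x) x * sin (2 * k * π * x))) =
      (if k = n then 1 / (8 * (n : ℝ)) - log n / (8 * π ^ 2 * n ^ 2) else 0) -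
        1 / (2 * π ^ 2) * T k := by
    rw [integral_mul_cos_mul_cos hn0, integral_mul_cos_mul_sin]
    rcases eq_or_ne k 0 with rfl | hk
    · simp [hT, hn0.symm]
    have hk' : (k : ℝ) ≠ 0 := by positivity
    have hadd {ψ : ℝ → ℝ} (hψ : Continuous ψ) :
        ∫ x in (0 : ℝ)..1, ((fun x ↦ log (Gamma x)) + fun x ↦ C * x) x * ψ x =
        (∫ x in (0 : ℝ)..1, log (Gamma x) * ψ x) + C * ∫ x in (0 : ℝ)..1, x * ψ x := by
      rw [← intervalIntegral.integral_const_mul, ← intervalIntegral.integral_add]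
      · refine intervalIntegral.integral_congr fun x _ ↦ ?_
        simp only [Pi.add_apply]
        ring
      · exact intervalIntegrable_log_Gamma.mul_continuousOn hψ.continuousOn
      · exact Continuous.intervalIntegrable (by fun_prop) _ _
    rw [hadd (by fun_prop), hadd (by fun_prop), integral_log_Gamma_mul_cos hk,
      integral_log_Gamma_mul_sin hk, integral_mul_cos_two_nat_mul_pi hk,
      integral_mul_sin_two_nat_mul_pi]
    rcases eq_or_ne k n with rfl | hkn
    · simp only [hT, or_true, if_true, sub_self, div_zero]
      field_simp
      ring
    · have h1 : (k : ℝ) - n ≠ 0 := sub_ne_zero.2 (by exact_mod_cast hkn)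
      have h2 : (k : ℝ) + n ≠ 0 := by positivity
      have hTk : T k = log k / ((k : ℝ) ^ 2 - (n : ℝ) ^ 2) := by
        simp only [hT, hkn, or_false]
        split_ifs with h
        · obtain rfl : k = 1 := by lia
          simp
        · rfl
      rw [hTk, if_neg hkn, if_neg hkn, sq_sub_sq]
      field_simp
      ring
  simp only [hterm] at hsum
  rw [hval] at hsum
  have hT_sum := ((hasSum_ite_eq n
    (1 / (8 * (n : ℝ)) - log n / (8 * π ^ 2 * n ^ 2))).sub hsum).mul_left (2 * π ^ 2)
  have hT_eq : ∑' i, T i = _ := HasSum.tsum_eq (by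
    convert! hT_sum using 1
    ext k
    field_simp
    ring)
  rw [hT_eq]
  field_simp
  ring_nf
end

section
/- ∫₀¹ x²·log²(sin(πx)/π) dx = 13π²/360 + (1/3)·log²(2π) + (1/π²)·log(2π)·ζ(3). -/
open Real MeasureTheory Set Filter Topology

/-- The exponential parametrisation of the unit circle by `[0, 1]`. -/
noncomputable def circleExp (x : ℝ) : ℂ := Complex.exp ((2 * π * x : ℝ) * Complex.I)

lemma continuous_circleExp : Continuous circleExp := by
  unfold circleExp
  fun_prop

lemma norm_circleExp (x : ℝ) : ‖circleExp x‖ = 1 :=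
  Complex.norm_exp_ofReal_mul_I _

lemma circleExp_pow_re (n : ℕ) (x : ℝ) : (circleExp x ^ n).re = Real.cos (2 * π * n * x) := by
  rw [circleExp, ← Complex.exp_nat_mul, ← Complex.exp_ofReal_mul_I_re]
  congr 2
  push_cast
  ring

lemma one_sub_circleExp (x : ℝ) :
    1 - circleExp x = ((2 * Real.sin (π * x) : ℝ) : ℂ) *
      Complex.exp ((π * (x - 1 / 2) : ℝ) * Complex.I) := by
  apply Complex.ext
  · rw [Complex.re_ofReal_mul, Complex.exp_ofReal_mul_I_re, circleExp, Complex.sub_re,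
      Complex.exp_ofReal_mul_I_re, Complex.one_re,
      show π * (x - 1 / 2) = π * x - π / 2 by ring, Real.cos_sub_pi_div_two,
      show 2 * π * x = 2 * (π * x) by ring, Real.cos_two_mul]
    linear_combination (-2) * Real.sin_sq_add_cos_sq (π * x)
  · rw [Complex.im_ofReal_mul, Complex.exp_ofReal_mul_I_im, circleExp, Complex.sub_im,
      Complex.exp_ofReal_mul_I_im, Complex.one_im,
      show π * (x - 1 / 2) = π * x - π / 2 by ring, Real.sin_sub_pi_div_two,
      show 2 * π * x = 2 * (π * x) by ring, Real.sin_two_mul]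
    ring

lemma sin_pi_mul_pos {x : ℝ} (hx : x ∈ Ioo (0 : ℝ) 1) : 0 < Real.sin (π * x) :=
  Real.sin_pos_of_pos_of_lt_pi (mul_pos pi_pos hx.1) (by nlinarith [pi_pos, hx.2])

lemma norm_one_sub_circleExp {x : ℝ} (hx : x ∈ Ioo (0 : ℝ) 1) :
    ‖1 - circleExp x‖ = 2 * Real.sin (π * x) := by
  rw [one_sub_circleExp, norm_mul, Complex.norm_exp_ofReal_mul_I, mul_one, Complex.norm_real,
    Real.norm_of_nonneg (by linarith [sin_pi_mul_pos hx])]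

lemma log_one_sub_circleExp {x : ℝ} (hx : x ∈ Ioo (0 : ℝ) 1) :
    Complex.log (1 - circleExp x) =
      (Real.log (2 * Real.sin (π * x)) : ℂ) + (π * (x - 1 / 2) : ℝ) * Complex.I := by
  have him : (((π * (x - 1 / 2) : ℝ) : ℂ) * Complex.I).im = π * (x - 1 / 2) := by
    rw [Complex.im_ofReal_mul, Complex.I_im, mul_one]
  rw [one_sub_circleExp, Complex.log_ofReal_mul (by linarith [sin_pi_mul_pos hx])
    (Complex.exp_ne_zero _), Complex.log_exp]
  · rw [him]; nlinarith [pi_pos, hx.1]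
  · rw [him]; nlinarith [pi_pos, hx.2]

lemma one_sub_circleExp_mem_slitPlane {x : ℝ} (hx : x ∈ Ioo (0 : ℝ) 1) :
    1 - circleExp x ∈ Complex.slitPlane := by
  left
  rw [one_sub_circleExp, Complex.re_ofReal_mul, Complex.exp_ofReal_mul_I_re]
  refine mul_pos (by linarith [sin_pi_mul_pos hx]) (Real.cos_pos_of_mem_Ioo ⟨?_, ?_⟩)
  · nlinarith [pi_pos, hx.1]
  · nlinarith [pi_pos, hx.2]

lemma two_mul_mul_one_sub_le_sin {x : ℝ} (hx : x ∈ Ioo (0 : ℝ) 1) :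
    2 * (x * (1 - x)) ≤ Real.sin (π * x) := by
  obtain ⟨h0, h1⟩ := hx
  rcases le_total x (1 / 2) with h | h
  · have := Real.mul_le_sin (x := π * x) (by positivity) (by nlinarith [pi_pos])
    rw [show 2 / π * (π * x) = 2 * x by field_simp] at this
    nlinarith
  · have := Real.mul_le_sin (x := π * (1 - x)) (mul_nonneg pi_pos.le (by linarith))
      (by nlinarith [pi_pos])
    rw [show 2 / π * (π * (1 - x)) = 2 * (1 - x) by field_simp,
      show π * (1 - x) = π - π * x by ring, Real.sin_pi_sub] at this
    nlinarith

lemma sq_log_le {x : ℝ} (h0 : 0 < x) (h1 : x ≤ 1) : Real.log x ^ 2 ≤ 16 * x ^ (-(1 / 2) : ℝ) := by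
  have h := (abs_log_mul_self_rpow_lt x (1 / 4) h0 h1 (by norm_num)).le
  have hp : 0 < x ^ (1 / 4 : ℝ) := rpow_pos_of_pos h0 _
  have hsq : x ^ (1 / 2 : ℝ) = (x ^ (1 / 4 : ℝ)) ^ 2 := by
    rw [← rpow_natCast, ← rpow_mul h0.le]; norm_num
  rw [rpow_neg h0.le, ← div_eq_mul_inv, le_div_iff₀ (rpow_pos_of_pos h0 _), hsq, ← mul_pow,
    ← sq_abs]
  nlinarith [abs_nonneg (Real.log x * x ^ (1 / 4 : ℝ))]

/-- An integrable majorant for the square of `log (1 - r * circleExp x)`, uniform in `r`. -/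
noncomputable def logMajorant (x : ℝ) : ℝ :=
  3 * (25 + 16 * x ^ (-(1 / 2) : ℝ) + 16 * (1 - x) ^ (-(1 / 2) : ℝ))

lemma intervalIntegrable_logMajorant : IntervalIntegrable logMajorant volume 0 1 := by
  have h : IntervalIntegrable (fun x : ℝ => x ^ (-(1 / 2) : ℝ)) volume 0 1 :=
    intervalIntegral.intervalIntegrable_rpow' (by norm_num)
  have h' : IntervalIntegrable (fun x : ℝ => (1 - x) ^ (-(1 / 2) : ℝ)) volume 0 1 := by
    simpa using (h.comp_sub_left 1).symm
  exact ((intervalIntegrable_const.add (h.const_mul 16)).add (h'.const_mul 16)).const_mul 3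

lemma norm_log_le_abs_log_norm_add_pi (w : ℂ) : ‖Complex.log w‖ ≤ |Real.log ‖w‖| + π := by
  refine (Complex.norm_le_abs_re_add_abs_im _).trans ?_
  rw [Complex.log_re, Complex.log_im]
  gcongr
  exact Complex.abs_arg_le_pi w

lemma sq_norm_log_one_sub_le {r x : ℝ} (hr : r ∈ Icc (0 : ℝ) 1) (hx : x ∈ Ioo (0 : ℝ) 1) :
    ‖Complex.log (1 - r * circleExp x)‖ ^ 2 ≤ logMajorant x := by
  obtain ⟨h0, h1⟩ := hx
  set w := 1 - r * circleExp x with hw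
  have hnorm : ‖(r : ℂ) * circleExp x‖ = r := by
    rw [norm_mul, norm_circleExp, mul_one, Complex.norm_real, Real.norm_of_nonneg hr.1]
  have hup : ‖w‖ ≤ 2 := by
    refine (norm_sub_le _ _).trans ?_
    rw [hnorm, norm_one]; linarith [hr.2]
  have hrw : 1 - r ≤ ‖w‖ := by
    have := norm_sub_norm_le (1 : ℂ) (r * circleExp x)
    rwa [hnorm, norm_one] at this
  have hlow : x * (1 - x) ≤ ‖w‖ := by
    have h2 : ‖1 - circleExp x‖ ≤ ‖w‖ + (1 - r) := by
      have : 1 - circleExp x = w - ((1 - r : ℝ) : ℂ) * circleExp x := by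
        rw [hw]; push_cast; ring
      rw [this]
      refine (norm_sub_le _ _).trans ?_
      rw [norm_mul, norm_circleExp, mul_one, Complex.norm_real,
        Real.norm_of_nonneg (by linarith [hr.2])]
    rw [norm_one_sub_circleExp ⟨h0, h1⟩] at h2
    nlinarith [two_mul_mul_one_sub_le_sin ⟨h0, h1⟩, mul_pos h0 (sub_pos.2 h1)]
  have hpos : 0 < x * (1 - x) := mul_pos h0 (sub_pos.2 h1)
  have hlog2 : Real.log 2 ≤ 1 := by linarith [Real.log_two_lt_d9]
  have hlx : Real.log x ≤ 0 := Real.log_nonpos h0.le h1.le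
  have hly : Real.log (1 - x) ≤ 0 := Real.log_nonpos (by linarith) (by linarith)
  have hl1 : Real.log ‖w‖ ≤ Real.log 2 := Real.log_le_log (hpos.trans_le hlow) hup
  have hl2 : Real.log x + Real.log (1 - x) ≤ Real.log ‖w‖ := by
    rw [← Real.log_mul h0.ne' (sub_pos.2 h1).ne']
    exact Real.log_le_log hpos hlow
  have habs : |Real.log ‖w‖| ≤ 1 + -Real.log x + -Real.log (1 - x) :=
    abs_le.2 ⟨by linarith, by linarith⟩
  have hn : ‖Complex.log w‖ ≤ 5 + -Real.log x + -Real.log (1 - x) := by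
    linarith [norm_log_le_abs_log_norm_add_pi w, pi_le_four]
  have hsx := sq_log_le h0 h1.le
  have hsy := sq_log_le (sub_pos.2 h1) (by linarith)
  calc ‖Complex.log w‖ ^ 2 ≤ (5 + -Real.log x + -Real.log (1 - x)) ^ 2 := by gcongr
    _ ≤ 3 * (25 + Real.log x ^ 2 + Real.log (1 - x) ^ 2) := by
      nlinarith [sq_nonneg (5 + Real.log x), sq_nonneg (5 + Real.log (1 - x)),
        sq_nonneg (Real.log x - Real.log (1 - x))]
    _ ≤ logMajorant x := by unfold logMajorant; linarith

lemma one_le_logMajorant {x : ℝ} (hx : x ∈ Ioo (0 : ℝ) 1) : 1 ≤ logMajorant x := by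
  have h1 := rpow_nonneg hx.1.le (-(1 / 2))
  have h2 := rpow_nonneg (sub_pos.2 hx.2).le (-(1 / 2))
  unfold logMajorant
  linarith

lemma norm_log_one_sub_le {r x : ℝ} (hr : r ∈ Icc (0 : ℝ) 1) (hx : x ∈ Ioo (0 : ℝ) 1) :
    ‖Complex.log (1 - r * circleExp x)‖ ≤ logMajorant x := by
  have h1 := sq_norm_log_one_sub_le hr hx
  have h2 := one_le_logMajorant hx
  by_contra! h
  nlinarith

lemma integral_sq_mul_cos (n : ℕ) (hn : n ≠ 0) :
    ∫ x in (0 : ℝ)..1, x ^ 2 * Real.cos (2 * π * n * x) = 1 / (n : ℝ) ^ 2 / (2 * π ^ 2) := by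
  have hn' : (n : ℝ) ≠ 0 := Nat.cast_ne_zero.2 hn
  have hk : (2 * π * n : ℝ) ≠ 0 := by positivity
  set k : ℝ := 2 * π * n with hkdef
  have hd : ∀ x ∈ uIcc (0 : ℝ) 1, HasDerivAt (fun x : ℝ => x ^ 2 * Real.sin (k * x) / k
      + 2 * x * Real.cos (k * x) / k ^ 2 - 2 * Real.sin (k * x) / k ^ 3)
      (x ^ 2 * Real.cos (k * x)) x := by
    intro x _
    have hl : HasDerivAt (fun x : ℝ => k * x) k x := by
      simpa using (hasDerivAt_id x).const_mul k
    have hs := hl.sin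
    have hc := hl.cos
    have := ((((hasDerivAt_pow 2 x).mul hs).div_const k).add
      ((((hasDerivAt_id x).const_mul 2).mul hc).div_const (k ^ 2))).sub
      ((hs.const_mul 2).div_const (k ^ 3))
    refine this.congr_deriv ?_
    simp only [id]
    field_simp
    push_cast
    ring
  rw [intervalIntegral.integral_eq_sub_of_hasDerivAt hd
    (by apply Continuous.intervalIntegrable; fun_prop)]
  have hs1 : Real.sin (k * 1) = 0 := by
    rw [hkdef, show 2 * π * (n : ℝ) * 1 = ((2 * n : ℕ) : ℝ) * π by push_cast; ring]
    exact Real.sin_nat_mul_pi _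
  have hc1 : Real.cos (k * 1) = 1 := by
    rw [hkdef, show 2 * π * (n : ℝ) * 1 = n * (2 * π) by ring]
    exact Real.cos_nat_mul_two_pi _
  rw [hs1, hc1]
  simp only [mul_zero, Real.sin_zero]
  rw [hkdef]
  field_simp
  ring

lemma ae_mem_Ioo_of_mem_uIoc {p : ℝ → Prop} (h : ∀ x ∈ Ioo (0 : ℝ) 1, p x) :
    ∀ᵐ x ∂volume, x ∈ uIoc (0 : ℝ) 1 → p x := by
  filter_upwards [Measure.ae_ne volume (1 : ℝ)] with x hx1 hx
  rw [uIoc_of_le zero_le_one] at hx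
  exact h x ⟨hx.1, lt_of_le_of_ne hx.2 hx1⟩

section Abel

variable {ι : Type*} [Countable ι] {c : ι → ℝ} {n : ι → ℕ} {Φ : ℂ → ℂ} {B : ℝ → ℝ}

/-- Termwise integration of a power series against `x ^ 2` along a circle inside the disc of
convergence. -/
lemma hasSum_integral_sq_mul_re (hc : ∀ i, 0 ≤ c i) (hn : ∀ i, n i ≠ 0)
    (hΦ : ∀ w : ℂ, ‖w‖ < 1 → HasSum (fun i => (c i : ℂ) * w ^ n i) (Φ w))
    {r : ℝ} (hr : r ∈ Ico (0 : ℝ) 1) :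
    HasSum (fun i => c i * r ^ n i * (1 / (n i : ℝ) ^ 2 / (2 * π ^ 2)))
      (∫ x in (0 : ℝ)..1, x ^ 2 * (Φ (r * circleExp x)).re) := by
  have hsum : Summable fun i => c i * r ^ n i := by
    have := Complex.hasSum_re (hΦ r (by
      rw [Complex.norm_real, Real.norm_of_nonneg hr.1]; exact hr.2))
    refine this.summable.congr fun i => ?_
    rw [← Complex.ofReal_pow, ← Complex.ofReal_mul, Complex.ofReal_re]
  have hterm : ∀ i, c i * r ^ n i * (1 / (n i : ℝ) ^ 2 / (2 * π ^ 2)) =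
      ∫ x in (0 : ℝ)..1, c i * r ^ n i * (x ^ 2 * Real.cos (2 * π * n i * x)) := by
    intro i
    rw [intervalIntegral.integral_const_mul, integral_sq_mul_cos _ (hn i)]
  simp_rw [hterm]
  refine intervalIntegral.hasSum_integral_of_dominated_convergence
    (fun i _ => c i * r ^ n i) ?_ ?_ ?_ ?_ ?_
  · intro i
    apply Continuous.aestronglyMeasurable
    fun_prop
  · refine fun i => ae_mem_Ioo_of_mem_uIoc fun x hx => ?_
    have h0 : 0 ≤ c i * r ^ n i := mul_nonneg (hc i) (pow_nonneg hr.1 _)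
    rw [norm_mul, Real.norm_of_nonneg h0, norm_mul]
    refine mul_le_of_le_one_right h0 (mul_le_one₀ ?_ (norm_nonneg _) (Real.abs_cos_le_one _))
    rw [Real.norm_of_nonneg (sq_nonneg x)]
    exact pow_le_one₀ hx.1.le hx.2.le
  · exact Eventually.of_forall fun _ _ => hsum
  · exact intervalIntegrable_const
  · refine Eventually.of_forall fun x _ => ?_
    have := (Complex.hasSum_re (hΦ (r * circleExp x) (by
      rw [norm_mul, norm_circleExp, mul_one, Complex.norm_real, Real.norm_of_nonneg hr.1]
      exact hr.2))).mul_left (x ^ 2)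
    refine (congrArg (HasSum · _) (funext fun i => ?_)).mpr this
    rw [mul_pow, ← Complex.ofReal_pow, Complex.re_ofReal_mul, Complex.re_ofReal_mul,
      circleExp_pow_re]
    ring

lemma intervalIntegrable_sq_mul_re (hm : Measurable Φ) (hB : IntervalIntegrable B volume 0 1)
    (hbd : ∀ r ∈ Icc (0 : ℝ) 1, ∀ x ∈ Ioo (0 : ℝ) 1, ‖Φ (r * circleExp x)‖ ≤ B x) :
    IntervalIntegrable (fun x => x ^ 2 * (Φ (circleExp x)).re) volume 0 1 := by
  refine hB.mono_fun' ?_ ?_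
  · have := continuous_circleExp.measurable
    exact Measurable.aestronglyMeasurable (by fun_prop)
  · rw [EventuallyLE, ae_restrict_iff' measurableSet_uIoc]
    refine ae_mem_Ioo_of_mem_uIoc fun x hx => ?_
    have h := hbd 1 ⟨zero_le_one, le_rfl⟩ x hx
    rw [Complex.ofReal_one, one_mul] at h
    rw [norm_mul, Real.norm_of_nonneg (sq_nonneg x)]
    exact (mul_le_of_le_one_left (norm_nonneg _) (pow_le_one₀ hx.1.le hx.2.le)).trans
      ((Complex.abs_re_le_norm _).trans h)

/-- Abel summation: termwise integration of a power series against `x ^ 2` along the boundary of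
its disc of convergence. -/
lemma integral_sq_mul_re_eq_tsum (hc : ∀ i, 0 ≤ c i) (hn : ∀ i, n i ≠ 0)
    (hΦ : ∀ w : ℂ, ‖w‖ < 1 → HasSum (fun i => (c i : ℂ) * w ^ n i) (Φ w))
    (hm : Measurable Φ) (hB : IntervalIntegrable B volume 0 1)
    (hbd : ∀ r ∈ Icc (0 : ℝ) 1, ∀ x ∈ Ioo (0 : ℝ) 1, ‖Φ (r * circleExp x)‖ ≤ B x)
    (hcont : ∀ x ∈ Ioo (0 : ℝ) 1, ContinuousAt Φ (circleExp x))
    (hs : Summable fun i => c i * (1 / (n i : ℝ) ^ 2)) :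
    ∫ x in (0 : ℝ)..1, x ^ 2 * (Φ (circleExp x)).re =
      (∑' i, c i * (1 / (n i : ℝ) ^ 2)) / (2 * π ^ 2) := by
  have hIco : ∀ᶠ r : ℝ in 𝓝[<] 1, r ∈ Ico (0 : ℝ) 1 := by
    filter_upwards [Ioo_mem_nhdsLT (zero_lt_one (α := ℝ))] with r hr using ⟨hr.1.le, hr.2⟩
  have hid : Tendsto (fun r : ℝ => r) (𝓝[<] 1) (𝓝 1) := tendsto_id.mono_left nhdsWithin_le_nhds
  have hleft : Tendsto (fun r : ℝ => ∫ x in (0 : ℝ)..1, x ^ 2 * (Φ (r * circleExp x)).re)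
      (𝓝[<] 1) (𝓝 (∫ x in (0 : ℝ)..1, x ^ 2 * (Φ (circleExp x)).re)) := by
    refine intervalIntegral.tendsto_integral_filter_of_dominated_convergence B ?_ ?_ hB ?_
    · have := continuous_circleExp.measurable
      exact Eventually.of_forall fun r => Measurable.aestronglyMeasurable (by fun_prop)
    · filter_upwards [hIco] with r hr
      refine ae_mem_Ioo_of_mem_uIoc fun x hx => ?_
      rw [norm_mul, Real.norm_of_nonneg (sq_nonneg x)]
      exact (mul_le_of_le_one_left (norm_nonneg _) (pow_le_one₀ hx.1.le hx.2.le)).trans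
        ((Complex.abs_re_le_norm _).trans (hbd r ⟨hr.1, hr.2.le⟩ x hx))
    · refine ae_mem_Ioo_of_mem_uIoc fun x hx => ?_
      have h1 : Tendsto (fun r : ℝ => (r : ℂ) * circleExp x) (𝓝[<] 1) (𝓝 (circleExp x)) := by
        simpa using ((Complex.continuous_ofReal.tendsto 1).comp hid).mul_const (circleExp x)
      exact ((Complex.continuous_re.tendsto _).comp ((hcont x hx).tendsto.comp h1)).const_mul _
  have hright : Tendsto (fun r : ℝ => ∑' i, c i * r ^ n i * (1 / (n i : ℝ) ^ 2 / (2 * π ^ 2)))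
      (𝓝[<] 1) (𝓝 (∑' i, c i * (1 / (n i : ℝ) ^ 2) / (2 * π ^ 2))) := by
    refine tendsto_tsum_of_dominated_convergence (hs.div_const (2 * π ^ 2)) ?_ ?_
    · intro i
      have := ((hid.pow (n i)).const_mul (c i)).mul_const (1 / (n i : ℝ) ^ 2 / (2 * π ^ 2))
      simpa [mul_div_assoc] using this
    · filter_upwards [hIco] with r hr i
      have h0 : 0 ≤ c i * (1 / (n i : ℝ) ^ 2) / (2 * π ^ 2) := by
        have := hc i
        positivity
      rw [show c i * r ^ n i * (1 / (n i : ℝ) ^ 2 / (2 * π ^ 2)) =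
        r ^ n i * (c i * (1 / (n i : ℝ) ^ 2) / (2 * π ^ 2)) by ring,
        Real.norm_of_nonneg (mul_nonneg (pow_nonneg hr.1 _) h0)]
      exact mul_le_of_le_one_left h0 (pow_le_one₀ hr.1 hr.2.le)
  rw [← tsum_div_const]
  refine tendsto_nhds_unique hleft (hright.congr' ?_)
  filter_upwards [hIco] with r hr using (hasSum_integral_sq_mul_re hc hn hΦ hr).tsum_eq

end Abel

section EulerSum

lemma hasSum_one_div_succ_sq : HasSum (fun n : ℕ => 1 / ((n : ℝ) + 1) ^ 2) (π ^ 2 / 6) := by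
  simpa using (hasSum_nat_add_iff' 1).2 hasSum_zeta_two

lemma hasSum_one_div_succ_pow_four :
    HasSum (fun n : ℕ => 1 / ((n : ℝ) + 1) ^ 4) (π ^ 4 / 90) := by
  simpa using (hasSum_nat_add_iff' 1).2 hasSum_zeta_four

lemma summable_one_div_succ_sq_mul :
    Summable fun p : ℕ × ℕ => 1 / ((p.1 : ℝ) + 1) ^ 2 * (1 / ((p.2 : ℝ) + 1) ^ 2) :=
  hasSum_one_div_succ_sq.summable.mul_of_nonneg hasSum_one_div_succ_sq.summable
    (fun _ => by positivity) (fun _ => by positivity)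

/-- A symmetric summable family splits into its diagonal and twice its strictly upper part. -/
lemma tsum_prod_eq_two_mul_add_diag {F : ℕ × ℕ → ℝ} (hF : Summable F)
    (hsymm : ∀ a b, F (a, b) = F (b, a)) :
    ∑' p, F p = 2 * ∑' p : ℕ × ℕ, F (p.1, p.1 + p.2 + 1) + ∑' a, F (a, a) := by
  have hU : Function.Injective fun p : ℕ × ℕ => (p.1, p.1 + p.2 + 1) := by
    rintro ⟨a, b⟩ ⟨c, d⟩ h
    simp only [Prod.mk.injEq] at h ⊢
    omega
  have hV : Function.Injective fun p : ℕ × ℕ => (p.1 + p.2 + 1, p.1) := by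
    rintro ⟨a, b⟩ ⟨c, d⟩ h
    simp only [Prod.mk.injEq] at h ⊢
    omega
  have hD : Function.Injective fun a : ℕ => (a, a) := fun a b h => (Prod.mk.inj h).1
  have eU : ∑' p : ℕ × ℕ, F (p.1, p.1 + p.2 + 1) = ∑' p, {p : ℕ × ℕ | p.1 < p.2}.indicator F p := by
    rw [← hU.tsum_eq (f := {p : ℕ × ℕ | p.1 < p.2}.indicator F)]
    · exact tsum_congr fun p => (indicator_of_mem (by simp) F).symm
    · rintro ⟨a, b⟩ h
      have : a < b := mem_of_indicator_ne_zero (s := {p : ℕ × ℕ | p.1 < p.2}) h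
      exact ⟨(a, b - a - 1), by simp; omega⟩
  have eV : ∑' p : ℕ × ℕ, F (p.1, p.1 + p.2 + 1) = ∑' p, {p : ℕ × ℕ | p.2 < p.1}.indicator F p := by
    rw [← hV.tsum_eq (f := {p : ℕ × ℕ | p.2 < p.1}.indicator F)]
    · refine tsum_congr fun p => ?_
      rw [hsymm]
      exact (indicator_of_mem (by simp) F).symm
    · rintro ⟨a, b⟩ h
      have : b < a := mem_of_indicator_ne_zero (s := {p : ℕ × ℕ | p.2 < p.1}) h
      exact ⟨(b, a - b - 1), by simp; omega⟩
  have eD : ∑' a, F (a, a) = ∑' p, {p : ℕ × ℕ | p.1 = p.2}.indicator F p := by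
    rw [← hD.tsum_eq (f := {p : ℕ × ℕ | p.1 = p.2}.indicator F)]
    · exact tsum_congr fun a => (indicator_of_mem (by simp) F).symm
    · rintro ⟨a, b⟩ h
      have : a = b := mem_of_indicator_ne_zero (s := {p : ℕ × ℕ | p.1 = p.2}) h
      exact ⟨a, by simp [this]⟩
  rw [two_mul]
  nth_rewrite 1 [eU]
  rw [eV, eD, ← (hF.indicator _).tsum_add (hF.indicator _),
    ← ((hF.indicator _).add (hF.indicator _)).tsum_add (hF.indicator _)]
  refine tsum_congr fun p => ?_
  rcases lt_trichotomy p.1 p.2 with h | h | h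
  · simp [indicator, h, h.ne, h.not_gt]
  · simp [indicator, h]
  · simp [indicator, h, h.ne', h.not_gt]

lemma summable_one_div_mul_mul_add_sq : Summable fun p : ℕ × ℕ =>
    1 / (((p.1 : ℝ) + 1) * (p.2 + 1)) * (1 / ((p.1 + p.2 + 2 : ℕ) : ℝ) ^ 2) := by
  refine Summable.of_nonneg_of_le (fun p => by positivity) (fun p => ?_)
    summable_one_div_succ_sq_mul
  rw [one_div_mul_one_div, one_div_mul_one_div]
  refine one_div_le_one_div_of_le (by positivity) ?_
  push_cast
  have h1 : (0 : ℝ) < (p.1 + 1) * (p.2 + 1) := by positivity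
  nlinarith [mul_le_mul_of_nonneg_left (show ((p.1 : ℝ) + 1) * (p.2 + 1) ≤ (p.1 + p.2 + 2) ^ 2 by
    nlinarith [sq_nonneg ((p.1 : ℝ) + 1), sq_nonneg ((p.2 : ℝ) + 1)]) h1.le]

/-- Euler's evaluation of `∑ 1 / (a b (a + b)²)` over positive integers. -/
lemma tsum_one_div_mul_mul_add_sq : ∑' p : ℕ × ℕ,
    1 / (((p.1 : ℝ) + 1) * (p.2 + 1)) * (1 / ((p.1 + p.2 + 2 : ℕ) : ℝ) ^ 2) = π ^ 4 / 180 := by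
  set F : ℕ × ℕ → ℝ := fun p => 1 / ((p.1 : ℝ) + 1) ^ 2 * (1 / ((p.2 : ℝ) + 1) ^ 2) with hFdef
  have hF : Summable F := summable_one_div_succ_sq_mul
  have hsplit := tsum_prod_eq_two_mul_add_diag hF (fun a b => mul_comm _ _)
  have hdiag : ∑' a, F (a, a) = π ^ 4 / 90 := by
    rw [← hasSum_one_div_succ_pow_four.tsum_eq]
    refine tsum_congr fun a => ?_
    simp only [hFdef]
    field_simp
  set T : ℕ × ℕ → ℝ := fun p => F (p.1, p.1 + p.2 + 1) with hTdef
  have hT : Summable T := hF.comp_injective (i := fun p : ℕ × ℕ => (p.1, p.1 + p.2 + 1)) (by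
    rintro ⟨a, b⟩ ⟨c, d⟩ h
    simp only [Prod.mk.injEq] at h ⊢
    omega)
  have hT' : Summable fun p : ℕ × ℕ => T p.swap := (Equiv.prodComm ℕ ℕ).summable_iff.2 hT
  have hTswap : ∑' p, T (Prod.swap p) = ∑' p, T p := (Equiv.prodComm ℕ ℕ).tsum_eq T
  have hS := summable_one_div_mul_mul_add_sq
  have hpf : ∑' p, F p = ∑' p, T p + ∑' p, T (Prod.swap p) + 2 * ∑' p : ℕ × ℕ,
      1 / (((p.1 : ℝ) + 1) * (p.2 + 1)) * (1 / ((p.1 + p.2 + 2 : ℕ) : ℝ) ^ 2) := by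
    rw [← hT.tsum_add hT', ← tsum_mul_left, ← (hT.add hT').tsum_add (hS.mul_left 2)]
    refine tsum_congr fun p => ?_
    simp only [hTdef, hFdef, Prod.fst_swap, Prod.snd_swap]
    push_cast
    have h1 : (p.1 : ℝ) + 1 ≠ 0 := by positivity
    have h2 : (p.2 : ℝ) + 1 ≠ 0 := by positivity
    have h3 : (p.1 : ℝ) + p.2 + 2 ≠ 0 := by positivity
    rw [show (p.1 : ℝ) + p.2 + 1 + 1 = p.1 + p.2 + 2 by ring,
      show (p.2 : ℝ) + p.1 + 1 + 1 = p.1 + p.2 + 2 by ring]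
    field_simp
    ring
  linarith

end EulerSum

lemma hasSum_neg_log_one_sub {w : ℂ} (hw : ‖w‖ < 1) :
    HasSum (fun k : ℕ => ((1 / ((k : ℝ) + 1) : ℝ) : ℂ) * w ^ (k + 1)) (-Complex.log (1 - w)) := by
  have := (hasSum_nat_add_iff' 1).2 (Complex.hasSum_taylorSeries_neg_log hw)
  simp only [Finset.range_one, Finset.sum_singleton, Nat.cast_zero, div_zero, sub_zero] at this
  refine (congrArg (HasSum · _) (funext fun k => ?_)).mpr this
  push_cast
  ring

lemma hasSum_sq_log_one_sub {w : ℂ} (hw : ‖w‖ < 1) :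
    HasSum (fun p : ℕ × ℕ => ((1 / (((p.1 : ℝ) + 1) * (p.2 + 1)) : ℝ) : ℂ) * w ^ (p.1 + p.2 + 2))
      (Complex.log (1 - w) ^ 2) := by
  have h := hasSum_neg_log_one_sub hw
  have hs := summable_mul_of_summable_norm h.summable.norm h.summable.norm
  have := HasSum.mul h h hs
  rw [neg_mul_neg, ← sq] at this
  refine (congrArg (HasSum · _) (funext fun p => ?_)).mpr this
  push_cast
  rw [← one_div_mul_one_div]
  ring

lemma continuousAt_log_one_sub {x : ℝ} (hx : x ∈ Ioo (0 : ℝ) 1) :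
    ContinuousAt (fun w : ℂ => Complex.log (1 - w)) (circleExp x) :=
  ContinuousAt.clog (by fun_prop) (one_sub_circleExp_mem_slitPlane hx)

lemma measurable_log_one_sub : Measurable fun w : ℂ => Complex.log (1 - w) :=
  Complex.measurable_log.comp (measurable_const.sub measurable_id)

lemma norm_neg_log_one_sub_le (r : ℝ) (hr : r ∈ Icc (0 : ℝ) 1) (x : ℝ) (hx : x ∈ Ioo (0 : ℝ) 1) :
    ‖-Complex.log (1 - r * circleExp x)‖ ≤ logMajorant x := by
  rw [norm_neg]
  exact norm_log_one_sub_le hr hx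

lemma norm_log_one_sub_sq_le (r : ℝ) (hr : r ∈ Icc (0 : ℝ) 1) (x : ℝ) (hx : x ∈ Ioo (0 : ℝ) 1) :
    ‖Complex.log (1 - r * circleExp x) ^ 2‖ ≤ logMajorant x := by
  rw [norm_pow]
  exact sq_norm_log_one_sub_le hr hx

lemma tsum_one_div_succ_cube :
    ∑' k : ℕ, 1 / ((k : ℝ) + 1) * (1 / ((k + 1 : ℕ) : ℝ) ^ 2) = (riemannZeta 3).re := by
  have h := zeta_eq_tsum_one_div_nat_add_one_cpow (s := 3) (by norm_num)
  have h' : riemannZeta 3 =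
      ((∑' k : ℕ, 1 / ((k : ℝ) + 1) * (1 / ((k + 1 : ℕ) : ℝ) ^ 2) : ℝ) : ℂ) := by
    rw [h, Complex.ofReal_tsum]
    refine tsum_congr fun k => ?_
    rw [show (3 : ℂ) = ((3 : ℕ) : ℂ) by norm_num, Complex.cpow_natCast]
    push_cast
    field_simp
  rw [h', Complex.ofReal_re]

lemma summable_one_div_succ_cube :
    Summable fun k : ℕ => 1 / ((k : ℝ) + 1) * (1 / ((k + 1 : ℕ) : ℝ) ^ 2) := by
  refine Summable.of_nonneg_of_le (fun k => by positivity) (fun k => ?_)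
    hasSum_one_div_succ_sq.summable
  push_cast
  refine mul_le_of_le_one_left (by positivity) ?_
  rw [div_le_one (by positivity)]
  linarith [(Nat.cast_nonneg k : (0 : ℝ) ≤ k)]

lemma integral_sq_mul_re_neg_log :
    ∫ x in (0 : ℝ)..1, x ^ 2 * (-Complex.log (1 - circleExp x)).re =
      (riemannZeta 3).re / (2 * π ^ 2) := by
  rw [← tsum_one_div_succ_cube]
  exact integral_sq_mul_re_eq_tsum (Φ := fun w => -Complex.log (1 - w)) (n := fun k : ℕ => k + 1)
    (fun k => by positivity) (fun k => k.succ_ne_zero) (fun w => hasSum_neg_log_one_sub)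
    measurable_log_one_sub.neg intervalIntegrable_logMajorant norm_neg_log_one_sub_le
    (fun x hx => (continuousAt_log_one_sub hx).neg) summable_one_div_succ_cube

lemma integral_sq_mul_re_log_sq :
    ∫ x in (0 : ℝ)..1, x ^ 2 * (Complex.log (1 - circleExp x) ^ 2).re = π ^ 2 / 360 := by
  have h := integral_sq_mul_re_eq_tsum (Φ := fun w => Complex.log (1 - w) ^ 2)
    (n := fun p : ℕ × ℕ => p.1 + p.2 + 2)
    (fun p => by positivity) (fun p => by omega) (fun w => hasSum_sq_log_one_sub)
    (measurable_log_one_sub.pow_const 2) intervalIntegrable_logMajorant norm_log_one_sub_sq_le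
    (fun x hx => (continuousAt_log_one_sub hx).pow 2) summable_one_div_mul_mul_add_sq
  rw [h, tsum_one_div_mul_mul_add_sq]
  field_simp
  norm_num

lemma sq_mul_log_sin_div_pi_sq {x : ℝ} (hx : x ∈ Ioo (0 : ℝ) 1) :
    x ^ 2 * Real.log (Real.sin (π * x) / π) ^ 2 =
      x ^ 2 * (Complex.log (1 - circleExp x) ^ 2).re
        + 2 * Real.log (2 * π) * (x ^ 2 * (-Complex.log (1 - circleExp x)).re)
        + (π ^ 2 * (x ^ 2 * (x - 1 / 2) ^ 2) + Real.log (2 * π) ^ 2 * x ^ 2) := by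
  have hs := sin_pi_mul_pos hx
  have hlog : Real.log (Real.sin (π * x) / π) =
      Real.log (2 * Real.sin (π * x)) - Real.log (2 * π) := by
    rw [← Real.log_div (by positivity) (by positivity), mul_div_mul_left _ _ two_ne_zero]
  rw [hlog, log_one_sub_circleExp hx]
  simp [sq]
  ring

/-- `∫₀¹ x²·log²(sin(πx)/π) dx = 13π²/360 + (1/3)·log²(2π) + (1/π²)·log(2π)·ζ(3)`. -/
theorem integral_xsq_logsq_sin_div_pi :
    ∫ x in (0:ℝ)..1, x ^ 2 * Real.log (Real.sin (π * x) / π) ^ 2 =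
      13 * π ^ 2 / 360 + (1 / 3) * Real.log (2 * π) ^ 2
        + (1 / π ^ 2) * Real.log (2 * π) * (riemannZeta 3).re := by
  rw [intervalIntegral.integral_congr_ae
    (ae_mem_Ioo_of_mem_uIoc fun x hx => sq_mul_log_sin_div_pi_sq hx)]
  have h1 := intervalIntegrable_sq_mul_re (Φ := fun w => -Complex.log (1 - w))
    measurable_log_one_sub.neg intervalIntegrable_logMajorant norm_neg_log_one_sub_le
  have h2 := intervalIntegrable_sq_mul_re (Φ := fun w => Complex.log (1 - w) ^ 2)
    (measurable_log_one_sub.pow_const 2) intervalIntegrable_logMajorant norm_log_one_sub_sq_le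
  have hpoly : ∫ x in (0 : ℝ)..1,
      (π ^ 2 * (x ^ 2 * (x - 1 / 2) ^ 2) + Real.log (2 * π) ^ 2 * x ^ 2) =
      π ^ 2 / 30 + Real.log (2 * π) ^ 2 / 3 := by
    have hx : ∀ x : ℝ, π ^ 2 * (x ^ 2 * (x - 1 / 2) ^ 2) + Real.log (2 * π) ^ 2 * x ^ 2 =
        π ^ 2 * x ^ 4 - π ^ 2 * x ^ 3 + (π ^ 2 / 4 + Real.log (2 * π) ^ 2) * x ^ 2 :=
      fun x => by ring
    simp_rw [hx]
    rw [intervalIntegral.integral_add, intervalIntegral.integral_sub]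
    · simp only [intervalIntegral.integral_const_mul, integral_pow]
      norm_num
      ring
    all_goals exact Continuous.intervalIntegrable (by fun_prop) _ _
  rw [intervalIntegral.integral_add (h2.add (h1.const_mul _))
      (Continuous.intervalIntegrable (by fun_prop) _ _),
    intervalIntegral.integral_add h2 (h1.const_mul _), intervalIntegral.integral_const_mul,
    integral_sq_mul_re_neg_log, integral_sq_mul_re_log_sq, hpoly]
  field_simp
  ring
end
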